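/- Fix Ω₁ > 0 and 0 < α < 2, set Ω(ε) = Ω₁/ε^{1+α}, α′ = min(α, 2 − α), and T′_ε = {x ∈ B₁ : |x| ≤ 1 − ε^{α′/4}}. There exist constants C = C(Ω₁) > 0, C′ = C′(Ω₁) > 0 and ε₀ > 0 such that for all 0 < ε < ε₀, every GP minimizer Ψ of E^GP_{ε,Ω(ε)}, and every x ∈ T′_ε, |Ψ(x)|² ≤ C ε^{α′/3} |log ε| · exp(−C′ dist(x, ∂T′_ε)² / ε^{1+α′/2}); i.e., the density is exponentially small everywhere except in a thin boundary layer. -/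

import Mathlib

open MeasureTheory Real Filter

noncomputable section

/-- Points of the plane. -/
abbrev Pt : Type := EuclideanSpace ℝ (Fin 2)

/-- The open unit disc. -/
def B1 : Set Pt := Metric.ball 0 1

/-- First partial derivative of a complex-valued function. -/
def pd1 (Ψ : Pt → ℂ) (x : Pt) : ℂ := fderiv ℝ Ψ x (EuclideanSpace.single 0 1)

/-- Second partial derivative of a complex-valued function. -/
def pd2 (Ψ : Pt → ℂ) (x : Pt) : ℂ := fderiv ℝ Ψ x (EuclideanSpace.single 1 1)

/-- Angular momentum operator `L = -i (x₁ ∂₂ - x₂ ∂₁)`. -/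
def angMom (Ψ : Pt → ℂ) (x : Pt) : ℂ :=
  -Complex.I * ((x 0 : ℂ) * pd2 Ψ x - (x 1 : ℂ) * pd1 Ψ x)

/-- The Gross-Pitaevskii energy density `|∇Ψ|² - Ω conj(Ψ) LΨ + |Ψ|⁴/ε²`. -/
def gpDensity (ε Ω : ℝ) (Ψ : Pt → ℂ) (x : Pt) : ℝ :=
  ‖pd1 Ψ x‖ ^ 2 + ‖pd2 Ψ x‖ ^ 2
    - Ω * (starRingEnd ℂ (Ψ x) * angMom Ψ x).re
    + ‖Ψ x‖ ^ 4 / ε ^ 2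

/-- The Gross-Pitaevskii functional on the unit disc. -/
def gpEnergy (ε Ω : ℝ) (Ψ : Pt → ℂ) : ℝ := ∫ x in B1, gpDensity ε Ω Ψ x

/-- Admissible (H¹, normalized) wave functions. -/
def gpAdm (Ψ : Pt → ℂ) : Prop :=
  DifferentiableOn ℝ Ψ B1 ∧
  IntegrableOn (fun x => ‖Ψ x‖ ^ 2) B1 ∧
  IntegrableOn (fun x => ‖pd1 Ψ x‖ ^ 2 + ‖pd2 Ψ x‖ ^ 2) B1 ∧
  IntegrableOn (fun x => ‖Ψ x‖ ^ 4) B1 ∧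
  IntegrableOn (fun x => (starRingEnd ℂ (Ψ x) * angMom Ψ x).re) B1 ∧
  (∫ x in B1, ‖Ψ x‖ ^ 2) = 1

/-- The GP ground-state energy: infimum of the functional over normalized functions. -/
def gpGround (ε Ω : ℝ) : ℝ := sInf {E | ∃ Ψ : Pt → ℂ, gpAdm Ψ ∧ E = gpEnergy ε Ω Ψ}

/-- A GP minimizer: a normalized admissible function attaining the infimum. -/
def IsGPMinimizer (ε Ω : ℝ) (Ψ : Pt → ℂ) : Prop :=
  gpAdm Ψ ∧ gpEnergy ε Ω Ψ = gpGround ε Ω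

/-- The Thomas-Fermi functional. -/
def tfEnergy (Ω₀ : ℝ) (ρ : Pt → ℝ) : ℝ :=
  ∫ x in B1, ((ρ x) ^ 2 - Ω₀ ^ 2 * ‖x‖ ^ 2 * ρ x / 4)

/-- Admissible TF densities: nonnegative, in L²(B₁), of total mass one. -/
def tfAdm (ρ : Pt → ℝ) : Prop :=
  IntegrableOn ρ B1 ∧ IntegrableOn (fun x => (ρ x) ^ 2) B1 ∧
  (∀ᵐ x ∂(volume.restrict B1), 0 ≤ ρ x) ∧ (∫ x in B1, ρ x) = 1

/-- The TF ground-state energy. -/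
def tfGround (Ω₀ : ℝ) : ℝ := sInf {E | ∃ ρ : Pt → ℝ, tfAdm ρ ∧ E = tfEnergy Ω₀ ρ}

/-- Radius of the TF "hole". -/
def R0 (Ω₀ : ℝ) : ℝ := Real.sqrt (1 - 4 / (Real.sqrt π * Ω₀))

/-- The TF minimizer. -/
def rhoTF (Ω₀ : ℝ) (x : Pt) : ℝ :=
  if Ω₀ ≤ 4 / Real.sqrt π then 1 / π - Ω₀ ^ 2 / 16 * (1 - 2 * ‖x‖ ^ 2)
  else max 0 (Ω₀ ^ 2 / 8 * (‖x‖ ^ 2 - 1) + Ω₀ / (2 * Real.sqrt π))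

/-- Inner radius of the support of the TF minimizer in the rapid-rotation regime. -/
def Reps (Ω₁ α ε : ℝ) : ℝ := Real.sqrt (1 - 4 * ε ^ α / (Real.sqrt π * Ω₁))

/-- The TF minimizer in the rapid-rotation regime. -/
def rhoTFeps (Ω₁ α ε : ℝ) (x : Pt) : ℝ :=
  Ω₁ ^ 2 / (8 * ε ^ (2 * α)) * max 0 (‖x‖ ^ 2 - (Reps Ω₁ α ε) ^ 2)

/-- The TF functional of the rapid-rotation regime. -/
def tfEpsEnergy (Ω₁ α ε : ℝ) (ρ : Pt → ℝ) : ℝ :=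
  ε ^ (2 * α) * ∫ x in B1, ((ρ x) ^ 2 - Ω₁ ^ 2 * ‖x‖ ^ 2 * ρ x / (4 * ε ^ (2 * α)))

/-!
Completing the magnetic square bounds the quadratic part of the energy density below by
`-Ω²|x|²|Ψ|²/4`. A giant vortex concentrated near the unit circle shows that the ground state energy
is `-Ω²/4` up to a small relative error, so the chemical potential lies below this centrifugal
potential by an amount `K²` everywhere except close to the boundary. Varying a minimizer among the
functions `(1 + tη)Ψ` then makes its density a subsolution, `Δ|Ψ|² ≥ 2K²|Ψ|²`. The mean value
inequality for such subsolutions halves the density on each length of order `1/K`, and hence forces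
exponential decay.
-/

open Metric Module Topology
open scoped Gradient Laplacian InnerProductSpace RealInnerProductSpace ComplexConjugate

/-! ### Powers of the ball bump -/

theorem hasDerivAt_max_zero_pow (n : ℕ) (t : ℝ) :
    HasDerivAt (fun t : ℝ => max 0 t ^ (n + 2)) ((n + 2) * max 0 t ^ (n + 1)) t := by
  have away_from_zero : ∀ t : ℝ, t ≠ 0 →
      HasDerivAt (fun t : ℝ => max 0 t ^ (n + 2)) ((n + 2) * max 0 t ^ (n + 1)) t := by
    intro t ht
    rcases ht.lt_or_gt with h | h
    · have heq : (fun t : ℝ => max 0 t ^ (n + 2)) =ᶠ[𝓝 t] fun _ => (0 : ℝ) := by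
        filter_upwards [gt_mem_nhds h] with u hu
        simp [max_eq_left hu.le]
      simpa [max_eq_left h.le] using (hasDerivAt_const t (0 : ℝ)).congr_of_eventuallyEq heq
    · have heq : (fun t : ℝ => max 0 t ^ (n + 2)) =ᶠ[𝓝 t] fun t => t ^ (n + 2) := by
        filter_upwards [lt_mem_nhds h] with u hu
        rw [max_eq_right hu.le]
      simpa [max_eq_right h.le] using (hasDerivAt_pow (n + 2) t).congr_of_eventuallyEq heq
  exact hasDerivAt_of_hasDerivAt_of_ne' away_from_zero (by fun_prop) (by fun_prop) t

theorem contDiff_max_zero_pow (n : ℕ) : ContDiff ℝ n (fun t : ℝ => max 0 t ^ (n + 1)) := by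
  induction n with
  | zero => exact contDiff_zero.2 (by fun_prop)
  | succ n ih =>
    have hderiv : deriv (fun t : ℝ => max 0 t ^ (n + 2)) =
        fun t => (n + 2 : ℝ) * max 0 t ^ (n + 1) :=
      funext fun t => (hasDerivAt_max_zero_pow n t).deriv
    rw [Nat.cast_succ, contDiff_succ_iff_deriv]
    refine ⟨fun t => (hasDerivAt_max_zero_pow n t).differentiableAt, by simp, ?_⟩
    rw [hderiv]
    exact contDiff_const.mul ih

section Laplacian

variable {E : Type*} [NormedAddCommGroup E] [InnerProductSpace ℝ E] [FiniteDimensional ℝ E]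

theorem laplacian_eq_sum_fderiv_fderiv {f : E → ℝ} (hf : ContDiff ℝ 2 f) (x : E) :
    Δ f x = ∑ i, fderiv ℝ (fun y => fderiv ℝ f y (stdOrthonormalBasis ℝ E i)) x
      (stdOrthonormalBasis ℝ E i) := by
  have hfst : DifferentiableAt ℝ (fderiv ℝ f) x :=
    (hf.fderiv_right (m := 1) (by norm_num)).differentiable (by norm_num) x
  rw [InnerProductSpace.laplacian_eq_iteratedFDeriv_stdOrthonormalBasis]
  refine Finset.sum_congr rfl fun i _ => ?_
  rw [iteratedFDeriv_two_apply, fderiv_clm_apply hfst (differentiableAt_const _)]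
  simp

end Laplacian

section BallBump

variable {E : Type*} [NormedAddCommGroup E]

/-- The bump `x ↦ max(0, s² - ‖x - c‖²)` on the ball of centre `c` and radius `|s|`. Its powers are
the test functions with which subsolutions are probed. -/
def ballBump (c : E) (s : ℝ) (x : E) : ℝ := max 0 (s ^ 2 - ‖x - c‖ ^ 2)

theorem ballBump_nonneg (c : E) (s : ℝ) (x : E) : 0 ≤ ballBump c s x := le_max_left _ _

theorem ballBump_le (c : E) (s : ℝ) (x : E) : ballBump c s x ≤ s ^ 2 :=
  max_le (sq_nonneg s) (sub_le_self _ (sq_nonneg _))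

theorem ballBump_eq_zero {c : E} {s : ℝ} {x : E} (hs : 0 ≤ s) (hx : x ∉ ball c s) :
    ballBump c s x = 0 := by
  rw [mem_ball_iff_norm, not_lt] at hx
  exact max_eq_left (sub_nonpos.2 (by gcongr))

theorem ballBump_mul_norm_sq (c : E) (s : ℝ) (x : E) :
    ballBump c s x * ‖x - c‖ ^ 2 = ballBump c s x * (s ^ 2 - ballBump c s x) := by
  rcases le_total (s ^ 2 - ‖x - c‖ ^ 2) 0 with h | h
  · simp [ballBump, max_eq_left h]
  · simp [ballBump, max_eq_right h]

@[fun_prop]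
theorem continuous_ballBump (c : E) (s : ℝ) : Continuous (ballBump c s) := by
  unfold ballBump; fun_prop

theorem tsupport_ballBump_pow_subset {c : E} {s : ℝ} (hs : 0 ≤ s) {k : ℕ} (hk : k ≠ 0) :
    tsupport (fun x => ballBump c s x ^ k) ⊆ closedBall c s := by
  refine (isClosed_closedBall.closure_subset_iff).2 fun x hx => ?_
  by_contra hxs
  exact hx (by simp [ballBump_eq_zero hs (fun h => hxs (ball_subset_closedBall h)), hk])

theorem hasCompactSupport_ballBump_pow [ProperSpace E] (c : E) {s : ℝ} (hs : 0 ≤ s) {k : ℕ}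
    (hk : k ≠ 0) : HasCompactSupport (fun x => ballBump c s x ^ k) :=
  (isCompact_closedBall c s).of_isClosed_subset (isClosed_tsupport _)
    (tsupport_ballBump_pow_subset hs hk)

variable [InnerProductSpace ℝ E]

theorem contDiff_ballBump_pow (c : E) (s : ℝ) (n : ℕ) :
    ContDiff ℝ n (fun x => ballBump c s x ^ (n + 1)) :=
  (contDiff_max_zero_pow n).comp
    (contDiff_const.sub ((contDiff_id.sub contDiff_const).norm_sq ℝ))

theorem hasFDerivAt_ballBump_pow (c : E) (s : ℝ) (n : ℕ) (x : E) :
    HasFDerivAt (fun x => ballBump c s x ^ (n + 2))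
      ((-(2 * (n + 2)) * ballBump c s x ^ (n + 1)) • innerSL ℝ (x - c)) x := by
  have hsq : HasFDerivAt (fun x : E => s ^ 2 - ‖x - c‖ ^ 2) (-(2 • innerSL ℝ (x - c))) x := by
    simpa using ((hasFDerivAt_id x).sub_const c).norm_sq.const_sub (s ^ 2)
  refine ((hasDerivAt_max_zero_pow n _).comp_hasFDerivAt x hsq).congr_fderiv ?_
  ext v
  simp only [_root_.neg_apply, _root_.smul_apply, innerSL_apply_apply, nsmul_eq_mul,
    Nat.cast_ofNat, smul_eq_mul, ballBump]
  ring

variable [FiniteDimensional ℝ E]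

theorem laplacian_ballBump_pow (c : E) (s : ℝ) (n : ℕ) (x : E) :
    Δ (fun x => ballBump c s x ^ (n + 3)) x =
      2 * (n + 3) * (2 * (n + 2) * s ^ 2 * ballBump c s x ^ (n + 1) -
        (2 * n + 4 + finrank ℝ E) * ballBump c s x ^ (n + 2)) := by
  have hfst : ∀ y v, fderiv ℝ (fun x => ballBump c s x ^ (n + 3)) y v =
      -(2 * (n + 3)) * ballBump c s y ^ (n + 2) * ⟪y - c, v⟫ := by
    intro y v
    rw [(hasFDerivAt_ballBump_pow c s (n + 1) y).fderiv, _root_.smul_apply,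
      innerSL_apply_apply, smul_eq_mul]
    push_cast
    ring
  have hsnd : ∀ v, fderiv ℝ (fun y => fderiv ℝ (fun x => ballBump c s x ^ (n + 3)) y v) x v =
      -(2 * (n + 3)) * (ballBump c s x ^ (n + 2) * ‖v‖ ^ 2 -
        2 * (n + 2) * ballBump c s x ^ (n + 1) * ⟪x - c, v⟫ ^ 2) := by
    intro v
    have hinner : HasFDerivAt (fun y : E => ⟪y - c, v⟫) (innerSL ℝ v) x := by
      simp only [real_inner_comm v]
      exact (innerSL ℝ v).hasFDerivAt.comp x ((hasFDerivAt_id x).sub_const c)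
    simp only [hfst]
    rw [(((hasFDerivAt_ballBump_pow c s n x).const_mul (-(2 * (n + 3 : ℝ)))).fun_mul hinner).fderiv]
    simp only [_root_.add_apply, _root_.smul_apply, innerSL_apply_apply,
      smul_eq_mul, real_inner_self_eq_norm_sq]
    ring
  have hparseval := (stdOrthonormalBasis ℝ E).sum_sq_inner_left (x - c)
  have hsmooth : ContDiff ℝ 2 fun x => ballBump c s x ^ (n + 3) :=
    (contDiff_ballBump_pow c s (n + 2)).of_le (by norm_cast; omega)
  rw [laplacian_eq_sum_fderiv_fderiv hsmooth]
  simp only [hsnd, (stdOrthonormalBasis ℝ E).norm_eq_one, one_pow, mul_one, ← Finset.mul_sum,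
    Finset.sum_sub_distrib, Finset.sum_const, Finset.card_univ, Fintype.card_fin, nsmul_eq_mul,
    hparseval]
  linear_combination 4 * (n + 3) * (n + 2) * ballBump c s x ^ n * ballBump_mul_norm_sq c s x

end BallBump

/-! ### Weighted ball means -/

theorem hasDerivAt_ballBump_pow_radius {E : Type*} [NormedAddCommGroup E] (c : E) (n : ℕ) (s : ℝ)
    (x : E) : HasDerivAt (fun s => ballBump c s x ^ (n + 2))
      (2 * s * (n + 2) * ballBump c s x ^ (n + 1)) s := by
  have hsq : HasDerivAt (fun s : ℝ => s ^ 2 - ‖x - c‖ ^ 2) (2 * s) s := by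
    simpa using (hasDerivAt_pow 2 s).sub_const (‖x - c‖ ^ 2)
  exact ((hasDerivAt_max_zero_pow n _).comp s hsq).congr_deriv (by rw [ballBump]; ring)

section BallMoment

variable {E : Type*} [NormedAddCommGroup E] [MeasurableSpace E] {μ : Measure E} {U : E → ℝ}

/-- The `k`-th moment of `U` on the ball of centre `c` and radius `s`: the integral of `U` against
the `k`-th power of `ballBump c s`. -/
def ballMoment (μ : Measure E) (U : E → ℝ) (c : E) (k : ℕ) (s : ℝ) : ℝ :=
  ∫ x, ballBump c s x ^ k * U x ∂μ

/-- The `k`-th moment of the constant function `1` on the unit ball. -/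
def ballMass (μ : Measure E) (k : ℕ) : ℝ := ∫ x, ballBump 0 1 x ^ k ∂μ

/-- The average of `U` on the ball of centre `c` and radius `s` with weight the `k`-th power of
`ballBump c s`. -/
def ballMean (μ : Measure E) (U : E → ℝ) (c : E) (k : ℕ) (s : ℝ) : ℝ :=
  ballMoment μ U c k s / ∫ x, ballBump c s x ^ k ∂μ

variable [OpensMeasurableSpace E]

theorem integrable_ballBump_pow_mul (hU : Integrable U μ) (c : E) (k : ℕ) (s : ℝ) :
    Integrable (fun x => ballBump c s x ^ k * U x) μ := by
  refine hU.bdd_mul (c := (s ^ 2) ^ k) (by fun_prop) (Eventually.of_forall fun x => ?_)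
  rw [norm_of_nonneg (pow_nonneg (ballBump_nonneg c s x) k)]
  exact pow_le_pow_left₀ (ballBump_nonneg c s x) (ballBump_le c s x) k

theorem hasDerivAt_ballMoment (hU : Integrable U μ) (c : E) (n : ℕ) (s : ℝ) :
    HasDerivAt (ballMoment μ U c (n + 2)) (2 * s * (n + 2) * ballMoment μ U c (n + 1) s) s := by
  have hbound : ∀ x, ∀ t ∈ ball s 1, ‖2 * t * (n + 2) * (ballBump c t x ^ (n + 1) * U x)‖ ≤
      2 * (|s| + 1) * (n + 2) * ((|s| + 1) ^ 2) ^ (n + 1) * ‖U x‖ := by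
    intro x t ht
    have habs : |t| ≤ |s| + 1 := by
      rw [mem_ball, Real.dist_eq] at ht
      linarith [abs_sub_abs_le_abs_sub t s]
    have hbump : ballBump c t x ≤ (|s| + 1) ^ 2 := by
      refine (ballBump_le c t x).trans ?_
      rw [← sq_abs]
      gcongr
    have hnonneg := ballBump_nonneg c t x
    simp only [norm_mul, norm_pow, Real.norm_eq_abs, abs_two, abs_of_nonneg hnonneg]
    rw [abs_of_nonneg (by positivity : (0 : ℝ) ≤ n + 2), ← mul_assoc]
    gcongr
  have hderiv := (hasDerivAt_integral_of_dominated_loc_of_deriv_le (ball_mem_nhds s one_pos)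
    (Eventually.of_forall fun t =>
      (integrable_ballBump_pow_mul hU c (n + 2) t).aestronglyMeasurable)
    (integrable_ballBump_pow_mul hU c (n + 2) s)
    ((integrable_ballBump_pow_mul hU c (n + 1) s).const_mul _).aestronglyMeasurable
    (Eventually.of_forall hbound) (hU.norm.const_mul _)
    (Eventually.of_forall fun x t _ =>
      ((hasDerivAt_ballBump_pow_radius c n t x).mul_const (U x)).congr_deriv
        (mul_assoc _ _ _))).2
  rwa [integral_const_mul] at hderiv

end BallMoment

section BallMass

variable {E : Type*} [NormedAddCommGroup E] [NormedSpace ℝ E]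

theorem ballBump_eq_mul_ballBump_smul (c : E) {s : ℝ} (hs : 0 < s) (x : E) :
    ballBump c s x = s ^ 2 * ballBump 0 1 (s⁻¹ • (x - c)) := by
  have hscale : s ^ 2 - ‖x - c‖ ^ 2 = s ^ 2 * (1 ^ 2 - (s⁻¹ * ‖x - c‖) ^ 2) := by
    field_simp
  rw [ballBump, ballBump, sub_zero, norm_smul, norm_of_nonneg (inv_nonneg.2 hs.le), hscale,
    ← mul_zero (s ^ 2), ← mul_max_of_nonneg _ _ (sq_nonneg s), mul_zero]

variable [FiniteDimensional ℝ E] [MeasurableSpace E] [BorelSpace E] (μ : Measure E)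
  [μ.IsAddHaarMeasure]

theorem integral_ballBump_pow (c : E) (k : ℕ) {s : ℝ} (hs : 0 < s) :
    ∫ x, ballBump c s x ^ k ∂μ = s ^ (2 * k + finrank ℝ E) * ballMass μ k := by
  simp only [ballBump_eq_mul_ballBump_smul c hs, mul_pow, integral_const_mul]
  rw [integral_sub_right_eq_self (fun x => ballBump 0 1 (s⁻¹ • x) ^ k) c,
    Measure.integral_comp_smul μ (fun x => ballBump 0 1 x ^ k), inv_pow, inv_inv,
    abs_of_pos (pow_pos hs _), smul_eq_mul, ballMass]
  ring

theorem ballMass_pos {k : ℕ} (hk : k ≠ 0) : 0 < ballMass μ k := by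
  have hcont : Continuous fun x : E => ballBump 0 1 x ^ k := by fun_prop
  refine hcont.integral_pos_of_hasCompactSupport_nonneg_nonzero (x := 0)
    (hasCompactSupport_ballBump_pow 0 zero_le_one hk)
    (fun x => pow_nonneg (ballBump_nonneg 0 1 x) k) ?_
  simp [ballBump]

theorem ballMass_succ_mul (n : ℕ) :
    (2 * n + 4 + finrank ℝ E) * ballMass μ (n + 2) = 2 * (n + 2) * ballMass μ (n + 1) := by
  set U : E → ℝ := (closedBall (0 : E) 2).indicator 1
  have hU : Integrable U μ :=
    (integrable_indicator_iff measurableSet_closedBall).2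
      (continuousOn_const.integrableOn_compact (isCompact_closedBall 0 2))
  have hmoment : ∀ (k : ℕ) (s : ℝ), 0 < s → s < 2 →
      ballMoment μ U 0 (k + 1) s = s ^ (2 * (k + 1) + finrank ℝ E) * ballMass μ (k + 1) := by
    intro k s hs hs2
    rw [← integral_ballBump_pow μ 0 _ hs]
    refine integral_congr_ae (Eventually.of_forall fun x => ?_)
    by_cases hx : x ∈ closedBall (0 : E) 2
    · simp [U, hx]
    · have hxs : x ∉ ball (0 : E) s := fun h =>
        hx (ball_subset_closedBall (ball_subset_ball hs2.le h))
      simp [U, hx, ballBump_eq_zero hs.le hxs]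
  have hpow : HasDerivAt (ballMoment μ U 0 (n + 2))
      ((2 * n + 4 + finrank ℝ E) * ballMass μ (n + 2)) 1 := by
    have heq : ballMoment μ U 0 (n + 2) =ᶠ[𝓝 1]
        fun s => s ^ (2 * (n + 2) + finrank ℝ E) * ballMass μ (n + 2) := by
      filter_upwards [Ioo_mem_nhds zero_lt_one one_lt_two] with s hs
      exact hmoment (n + 1) s hs.1 hs.2
    refine (((hasDerivAt_pow _ 1).mul_const _).congr_of_eventuallyEq heq).congr_deriv ?_
    push_cast
    ring
  have huniq := hpow.unique (hasDerivAt_ballMoment hU 0 n 1)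
  rw [hmoment n 1 one_pos one_lt_two, one_pow, one_mul, mul_one] at huniq
  exact huniq

variable {U : E → ℝ}

theorem ballMoment_eq_mul_ballMean (c : E) {k : ℕ} (hk : k ≠ 0) {s : ℝ} (hs : 0 < s) :
    ballMoment μ U c k s = s ^ (2 * k + finrank ℝ E) * ballMass μ k * ballMean μ U c k s := by
  have hm := ballMass_pos μ hk
  rw [ballMean, integral_ballBump_pow μ c k hs, mul_div_cancel₀ _ (by positivity)]

variable {μ}

theorem ballMean_le (hU : Integrable U μ) {c : E} {k : ℕ} (hk : k ≠ 0) {s C : ℝ}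
    (hs : 0 < s) (hC : ∀ x ∈ closedBall c s, U x ≤ C) : ballMean μ U c k s ≤ C := by
  have hm := ballMass_pos μ hk
  have hle : ∀ x, ballBump c s x ^ k * U x ≤ C * ballBump c s x ^ k := by
    intro x
    by_cases hx : x ∈ closedBall c s
    · rw [mul_comm]
      exact mul_le_mul_of_nonneg_right (hC x hx) (pow_nonneg (ballBump_nonneg c s x) k)
    · simp [ballBump_eq_zero hs.le (fun h => hx (ball_subset_closedBall h)), hk]
  have hbump : Integrable (fun x => ballBump c s x ^ k) μ :=
    Continuous.integrable_of_hasCompactSupport (by fun_prop)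
      (hasCompactSupport_ballBump_pow c hs.le hk)
  have hpos : 0 < ∫ x, ballBump c s x ^ k ∂μ := by
    rw [integral_ballBump_pow μ c k hs]
    positivity
  rw [ballMean, div_le_iff₀ hpos, ← integral_const_mul]
  exact integral_mono (integrable_ballBump_pow_mul hU c k s) (hbump.const_mul C) hle

theorem ballMean_le_integral_div (hU : Integrable U μ) (hU₀ : ∀ x, 0 ≤ U x) (c : E) {k : ℕ}
    (hk : k ≠ 0) {s : ℝ} (hs : 0 < s) :
    ballMean μ U c k s ≤ (∫ x, U x ∂μ) / (s ^ finrank ℝ E * ballMass μ k) := by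
  have hm := ballMass_pos μ hk
  have hmoment : ballMoment μ U c k s ≤ (s ^ 2) ^ k * ∫ x, U x ∂μ := by
    rw [← integral_const_mul]
    refine integral_mono (integrable_ballBump_pow_mul hU c k s) (hU.const_mul _) fun x => ?_
    exact mul_le_mul_of_nonneg_right
      (pow_le_pow_left₀ (ballBump_nonneg c s x) (ballBump_le c s x) k) (hU₀ x)
  rw [ballMoment_eq_mul_ballMean μ c hk hs, ← pow_mul, pow_add] at hmoment
  rw [le_div_iff₀ (by positivity)]
  refine le_of_mul_le_mul_left (a := s ^ (2 * k)) ?_ (by positivity)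
  linarith

theorem hasDerivAt_ballMean (hU : Integrable U μ) (c : E) (n : ℕ) {s : ℝ} (hs : 0 < s) :
    HasDerivAt (ballMean μ U c (n + 2)) ((2 * n + 4 + finrank ℝ E) / s *
      (ballMean μ U c (n + 1) s - ballMean μ U c (n + 2) s)) s := by
  have hm := ballMass_pos μ (k := n + 2) (by omega)
  have heq : ballMean μ U c (n + 2) =ᶠ[𝓝 s] fun t =>
      ballMoment μ U c (n + 2) t / (t ^ (2 * (n + 2) + finrank ℝ E) * ballMass μ (n + 2)) := by
    filter_upwards [lt_mem_nhds hs] with t ht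
    rw [ballMean, integral_ballBump_pow μ c (n + 2) ht]
  have hderiv := (hasDerivAt_ballMoment hU c n s).div
    ((hasDerivAt_pow (2 * (n + 2) + finrank ℝ E) s).mul_const (ballMass μ (n + 2)))
    (by positivity)
  refine (hderiv.congr_of_eventuallyEq heq).congr_deriv ?_
  rw [ballMoment_eq_mul_ballMean μ c (k := n + 1) (by omega) hs,
    ballMoment_eq_mul_ballMean μ c (k := n + 2) (by omega) hs]
  have hrec := ballMass_succ_mul μ n
  have hexp : 2 * (n + 2) + finrank ℝ E = 2 * (n + 1) + finrank ℝ E + 2 := by ring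
  have hcast : ((2 * (n + 1) + finrank ℝ E + 2 : ℕ) : ℝ) = 2 * n + 4 + finrank ℝ E := by
    push_cast; ring
  rw [hexp, hcast, Nat.add_sub_assoc one_le_two]
  generalize ballMean μ U c (n + 1) s = A₁, ballMean μ U c (n + 2) s = A₂
  field_simp
  linear_combination (-s ^ (2 * (n + 1) + finrank ℝ E + 2) * A₁) * hrec

theorem tendsto_ballMean (hU : Integrable U μ) {c : E} (hc : ContinuousAt U c)
    {k : ℕ} (hk : k ≠ 0) : Tendsto (ballMean μ U c k) (𝓝[>] 0) (𝓝 (U c)) := by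
  have hm := ballMass_pos μ hk
  have hdecay : Tendsto (fun x : E => ‖x‖ ^ finrank ℝ E * (ballBump 0 1 x ^ k / ballMass μ k))
      (Bornology.cobounded E) (𝓝 0) := by
    refine tendsto_const_nhds.congr' ?_
    filter_upwards [Bornology.isBounded_def.1 (isBounded_ball (x := (0 : E)) (r := 1))] with x hx
    simp [ballBump_eq_zero zero_le_one hx, hk]
  have hpeak := (tendsto_integral_comp_smul_smul_of_integrable' (μ := μ)
    (φ := fun x : E => ballBump 0 1 x ^ k / ballMass μ k)
    (fun x => div_nonneg (pow_nonneg (ballBump_nonneg 0 1 x) k) hm.le)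
    (by rw [integral_div]; exact div_self hm.ne') hdecay hU hc).comp tendsto_inv_nhdsGT_zero
  refine hpeak.congr' ?_
  filter_upwards [self_mem_nhdsWithin] with s (hs : 0 < s)
  rw [Function.comp_apply, ballMean, integral_ballBump_pow μ c k hs, ballMoment, ← integral_div]
  refine integral_congr_ae (Eventually.of_forall fun x => ?_)
  have hsymm : ballBump 0 1 (s⁻¹ • (c - x)) = ballBump 0 1 (s⁻¹ • (x - c)) := by
    simp [ballBump, norm_smul, norm_sub_rev]
  simp only [hsymm, ballBump_eq_mul_ballBump_smul c hs, smul_eq_mul, inv_pow]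
  field_simp
  ring

end BallMass

/-! ### Decay of subsolutions -/

theorem le_of_tendsto_of_deriv_nonneg {F F' : ℝ → ℝ} {L S : ℝ} (hS : 0 < S)
    (hF : ∀ s ∈ Set.Ioc 0 S, HasDerivAt F (F' s) s) (hF' : ∀ s ∈ Set.Ioc 0 S, 0 ≤ F' s)
    (hL : Tendsto F (𝓝[>] 0) (𝓝 L)) : L ≤ F S := by
  have hmono : MonotoneOn F (Set.Ioc 0 S) := by
    refine monotoneOn_of_deriv_nonneg (convex_Ioc 0 S)
      (fun s hs => (hF s hs).continuousAt.continuousWithinAt)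
      (fun s hs => (hF s (interior_subset hs)).differentiableAt.differentiableWithinAt)
      fun s hs => ?_
    rw [(hF s (interior_subset hs)).deriv]
    exact hF' s (interior_subset hs)
  refine le_of_tendsto hL ?_
  filter_upwards [Ioc_mem_nhdsGT hS] with s hs
  exact hmono hs ⟨hS, le_rfl⟩ hs.2

section Subsolution

variable {E : Type*} [NormedAddCommGroup E] [InnerProductSpace ℝ E] [FiniteDimensional ℝ E]
  [MeasurableSpace E] {μ : Measure E} {lam : ℝ} {D : Set E} {U : E → ℝ}

/-- A nonnegative integrable function, continuous on `D`, with `lam * U ≤ Δ U` on `D` in the weak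
sense: the inequality is tested against nonnegative functions of class `C²` with compact support
in `D`. -/
structure IsSubsolution (μ : Measure E) (lam : ℝ) (D : Set E) (U : E → ℝ) : Prop where
  nonneg : ∀ x, 0 ≤ U x
  integrable : Integrable U μ
  continuousAt : ∀ x ∈ D, ContinuousAt U x
  mul_integral_le : ∀ φ : E → ℝ, ContDiff ℝ 2 φ → HasCompactSupport φ → tsupport φ ⊆ D →
    (∀ x, 0 ≤ φ x) → lam * ∫ x, φ x * U x ∂μ ≤ ∫ x, Δ φ x * U x ∂μ

namespace IsSubsolution

theorem mul_ballMoment_le [BorelSpace E] (h : IsSubsolution μ lam D U) {c : E} {s : ℝ} (hs : 0 < s)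
    (hD : closedBall c s ⊆ D) (n : ℕ) :
    lam * ballMoment μ U c (n + 3) s ≤ 2 * (n + 3) * (2 * (n + 2) * s ^ 2 *
      ballMoment μ U c (n + 1) s - (2 * n + 4 + finrank ℝ E) * ballMoment μ U c (n + 2) s) := by
  have hsmooth : ContDiff ℝ 2 fun x => ballBump c s x ^ (n + 3) :=
    (contDiff_ballBump_pow c s (n + 2)).of_le (by norm_cast; omega)
  have htest := h.mul_integral_le _ hsmooth (hasCompactSupport_ballBump_pow c hs.le (by omega))
    ((tsupport_ballBump_pow_subset hs.le (by omega)).trans hD)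
    fun x => pow_nonneg (ballBump_nonneg c s x) _
  refine htest.trans_eq ?_
  have hInt k := integrable_ballBump_pow_mul h.integrable c k s
  rw [ballMoment, ballMoment, ← integral_const_mul, ← integral_const_mul,
    ← integral_sub ((hInt _).const_mul _) ((hInt _).const_mul _), ← integral_const_mul]
  refine integral_congr_ae (Eventually.of_forall fun x => ?_)
  simp only [laplacian_ballBump_pow]
  ring

variable [BorelSpace E] [μ.IsAddHaarMeasure]

theorem mul_ballMean_le (h : IsSubsolution μ lam D U) {c : E} {s : ℝ} (hs : 0 < s)
    (hD : closedBall c s ⊆ D) (n : ℕ) :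
    lam * s / (2 * n + 6 + finrank ℝ E) * ballMean μ U c (n + 3) s ≤
      (2 * n + 4 + finrank ℝ E) / s * (ballMean μ U c (n + 1) s - ballMean μ U c (n + 2) s) := by
  have hmoment := h.mul_ballMoment_le hs hD n
  rw [ballMoment_eq_mul_ballMean μ c (k := n + 1) (by omega) hs,
    ballMoment_eq_mul_ballMean μ c (k := n + 2) (by omega) hs,
    ballMoment_eq_mul_ballMean μ c (k := n + 3) (by omega) hs] at hmoment
  have hm := ballMass_pos μ (k := n + 2) (by omega)
  have hrec₁ := ballMass_succ_mul μ n
  have hrec₂ : ballMass μ (n + 3) =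
      2 * (n + 3) * ballMass μ (n + 2) / (2 * n + 6 + finrank ℝ E) := by
    have hrec := ballMass_succ_mul μ (n + 1)
    push_cast at hrec
    rw [eq_div_iff (by positivity)]
    linear_combination hrec
  refine le_of_mul_le_mul_left (a := 2 * (n + 3) * s ^ (2 * (n + 2) + finrank ℝ E) * s *
    ballMass μ (n + 2)) ?_ (by positivity)
  calc _ = lam * (s ^ (2 * (n + 3) + finrank ℝ E) * ballMass μ (n + 3) *
        ballMean μ U c (n + 3) s) := by rw [hrec₂]; ring
    _ ≤ _ := hmoment
    _ = _ := by
      field_simp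
      linear_combination (-s ^ (2 * (n + 2) + finrank ℝ E) * ballMean μ U c (n + 1) s) * hrec₁

theorem le_ballMean_three (h : IsSubsolution μ lam D U) (hlam : 0 ≤ lam) {c : E} {S : ℝ}
    (hS : 0 < S) (hD : closedBall c S ⊆ D) : U c ≤ ballMean μ U c 3 S := by
  have hc := h.continuousAt c (hD (mem_closedBall_self hS.le))
  refine le_of_tendsto_of_deriv_nonneg hS
    (fun s hs => hasDerivAt_ballMean h.integrable c 1 hs.1) (fun s hs => ?_)
    (tendsto_ballMean h.integrable hc (by norm_num))
  refine le_trans ?_ (h.mul_ballMean_le hs.1 ((closedBall_subset_closedBall hs.2).trans hD) 1)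
  have hmean : 0 ≤ ballMean μ U c (1 + 3) s :=
    div_nonneg (integral_nonneg fun x => mul_nonneg (pow_nonneg (ballBump_nonneg c s x) _)
      (h.nonneg x)) (integral_nonneg fun x => pow_nonneg (ballBump_nonneg c s x) _)
  have := hs.1
  positivity

theorem mul_le_ballMean_two (h : IsSubsolution μ lam D U) (hlam : 0 ≤ lam) {c : E} {S : ℝ}
    (hS : 0 < S) (hD : closedBall c S ⊆ D) :
    (1 + lam * S ^ 2 / (2 * (6 + finrank ℝ E))) * U c ≤ ballMean μ U c 2 S := by
  have hc := h.continuousAt c (hD (mem_closedBall_self hS.le))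
  set a := lam / (2 * (6 + finrank ℝ E)) * U c
  have hderiv : ∀ s ∈ Set.Ioc 0 S, HasDerivAt (fun s => ballMean μ U c 2 s - a * s ^ 2) _ s :=
    fun s hs => (hasDerivAt_ballMean h.integrable c 0 hs.1).sub ((hasDerivAt_pow 2 s).const_mul a)
  have hlim : Tendsto (fun s => ballMean μ U c 2 s - a * s ^ 2) (𝓝[>] 0) (𝓝 (U c)) := by
    have hsq : Tendsto (fun s : ℝ => a * s ^ 2) (𝓝[>] 0) (𝓝 0) := by
      refine Tendsto.mono_left ?_ nhdsWithin_le_nhds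
      exact Continuous.tendsto' (by fun_prop) _ _ (by simp)
    simpa using (tendsto_ballMean h.integrable hc two_ne_zero).sub hsq
  have hmono := le_of_tendsto_of_deriv_nonneg hS hderiv (fun s hs => ?_) hlim
  · have ha : a * S ^ 2 = lam * S ^ 2 / (2 * (6 + finrank ℝ E)) * U c := by ring
    linarith
  · have hDs := (closedBall_subset_closedBall hs.2).trans hD
    have hmean := h.mul_ballMean_le hs.1 hDs 0
    have hcentre := mul_le_mul_of_nonneg_left (h.le_ballMean_three hlam hs.1 hDs)
      (div_nonneg (mul_nonneg hlam hs.1.le) (by positivity : (0 : ℝ) ≤ 6 + finrank ℝ E))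
    have ha : a * (2 * s) = lam * s / (6 + finrank ℝ E) * U c := by
      simp only [a]; field_simp
    norm_num at hmean ⊢
    linarith

theorem le_half (h : IsSubsolution μ lam D U) (hlam : 0 ≤ lam) {c : E} {S C : ℝ}
    (hS : 0 < S) (hlamS : 2 * (6 + finrank ℝ E) ≤ lam * S ^ 2) (hD : closedBall c S ⊆ D)
    (hC : ballMean μ U c 2 S ≤ C) : U c ≤ C / 2 := by
  have hgain : 1 ≤ lam * S ^ 2 / (2 * (6 + finrank ℝ E)) := (one_le_div (by positivity)).2 hlamS
  have := h.mul_le_ballMean_two hlam hS hD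
  have := mul_le_mul_of_nonneg_right hgain (h.nonneg c)
  linarith

theorem le_div_two_pow (h : IsSubsolution μ lam D U) (hlam : 0 ≤ lam) {S : ℝ}
    (hS : 0 < S) (hlamS : 2 * (6 + finrank ℝ E) ≤ lam * S ^ 2) (N : ℕ) {c : E}
    (hD : closedBall c ((N + 1) * S) ⊆ D) :
    U c ≤ (∫ x, U x ∂μ) / (S ^ finrank ℝ E * ballMass μ 2) / 2 ^ (N + 1) := by
  induction N generalizing c with
  | zero =>
    simp only [CharP.cast_eq_zero, zero_add, one_mul, pow_one] at hD ⊢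
    exact h.le_half hlam hS hlamS hD
      (ballMean_le_integral_div h.integrable h.nonneg c two_ne_zero hS)
  | succ N ih =>
    rw [pow_succ, ← div_div]
    refine h.le_half hlam hS hlamS ((closedBall_subset_closedBall ?_).trans hD)
      (ballMean_le h.integrable two_ne_zero hS fun x hx => ih ?_)
    · push_cast; nlinarith [N.cast_nonneg (α := ℝ)]
    · refine (closedBall_subset_closedBall' ?_).trans hD
      rw [mem_closedBall] at hx
      push_cast
      linarith

theorem le_mul_exp_neg (h : IsSubsolution μ lam D U) (hlam : 0 ≤ lam) {S r : ℝ}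
    (hS : 0 < S) (hlamS : 2 * (6 + finrank ℝ E) ≤ lam * S ^ 2) (hSr : S ≤ r) {c : E}
    (hD : closedBall c r ⊆ D) :
    U c ≤ 2 * (∫ x, U x ∂μ) / (S ^ finrank ℝ E * ballMass μ 2) * exp (-(r / (2 * S))) := by
  have hone : 1 ≤ r / S := (one_le_div hS).2 hSr
  obtain ⟨N, hN⟩ : ∃ N, ⌊r / S⌋₊ = N + 1 :=
    Nat.exists_eq_succ_of_ne_zero (Nat.floor_pos.2 hone).ne'
  have hle : (N + 1) * S ≤ r := by
    rw [← le_div_iff₀ hS, ← Nat.cast_add_one, ← hN]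
    exact Nat.floor_le (zero_le_one.trans hone)
  have hlt : r / S < N + 1 + 1 := by
    rw [← Nat.cast_add_one, ← hN]
    exact Nat.lt_floor_add_one _
  have hexp : 1 / 2 ^ (N + 1) ≤ 2 * exp (-(r / (2 * S))) := by
    have hhalf : r / (2 * S) ≤ log 2 * ↑(N + 2) := by
      rw [mul_comm 2 S, ← div_div]
      push_cast
      nlinarith [log_two_gt_d9, N.cast_nonneg (α := ℝ)]
    rw [exp_neg, ← div_eq_mul_inv, div_le_div_iff₀ (by positivity) (exp_pos _), one_mul,
      ← pow_succ', ← rpow_natCast, rpow_def_of_pos two_pos]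
    exact exp_le_exp.2 hhalf
  refine (h.le_div_two_pow hlam hS hlamS N ((closedBall_subset_closedBall hle).trans hD)).trans ?_
  have hA : 0 ≤ (∫ x, U x ∂μ) / (S ^ finrank ℝ E * ballMass μ 2) :=
    div_nonneg (integral_nonneg h.nonneg)
      (mul_nonneg (by positivity) (ballMass_pos μ two_ne_zero).le)
  have := mul_le_mul_of_nonneg_left hexp hA
  calc _ = _ := (mul_one_div _ _).symm
    _ ≤ _ := this
    _ = _ := by ring

end IsSubsolution

end Subsolution

/-! ### Integration by parts -/

theorem inner_gradient_eq_sum {ι E : Type*} [Fintype ι] [NormedAddCommGroup E]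
    [InnerProductSpace ℝ E] [CompleteSpace E] (b : OrthonormalBasis ι ℝ E) (f g : E → ℝ) (x : E) :
    ⟪∇ f x, ∇ g x⟫ = ∑ i, fderiv ℝ f x (b i) * fderiv ℝ g x (b i) := by
  rw [← b.sum_inner_mul_inner]
  simp only [real_inner_comm (∇ g x), inner_gradient_left]

section IntegrationByParts

variable {E : Type*} [NormedAddCommGroup E] [MeasurableSpace E] {μ : Measure E} {D : Set E}

theorem integrable_mul_of_tsupport_subset [OpensMeasurableSpace E] {ψ V : E → ℝ}
    (hψ : Continuous ψ) (hc : HasCompactSupport ψ) (hD : tsupport ψ ⊆ D) (hV : IntegrableOn V D μ) :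
    Integrable (fun x => ψ x * V x) μ := by
  obtain ⟨C, hC⟩ := hc.exists_bound_of_continuous hψ
  have hsupp : Function.support (fun x => ψ x * V x) ⊆ D :=
    (Function.support_mul_subset_left ψ V).trans ((subset_tsupport ψ).trans hD)
  rw [← integrableOn_iff_integrable_of_support_subset hsupp]
  exact hV.bdd_mul hψ.aestronglyMeasurable (Eventually.of_forall hC)

theorem integrableOn_continuous_mul_of_isBounded [OpensMeasurableSpace E] [ProperSpace E]
    {w V : E → ℝ} (hD : MeasurableSet D) (hbdd : Bornology.IsBounded D) (hw : Continuous w)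
    (hV : IntegrableOn V D μ) : IntegrableOn (fun x => w x * V x) D μ := by
  obtain ⟨C, hC⟩ := hbdd.isCompact_closure.exists_bound_of_continuousOn hw.continuousOn
  exact hV.bdd_mul hw.aestronglyMeasurable
    (ae_restrict_of_forall_mem hD fun x hx => hC x (subset_closure hx))

variable [InnerProductSpace ℝ E] [FiniteDimensional ℝ E] [BorelSpace E] [μ.IsAddHaarMeasure]

theorem setIntegral_mul_fderiv_eq_neg {ψ U : E → ℝ} (hD : IsOpen D) (hU : DifferentiableOn ℝ U D)
    (hInt : IntegrableOn U D μ) (hdint : IntegrableOn (fderiv ℝ U) D μ) (hψ : ContDiff ℝ 1 ψ)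
    (hc : HasCompactSupport ψ) (hψD : tsupport ψ ⊆ D) (v : E) :
    ∫ x in D, ψ x * fderiv ℝ U x v ∂μ = -∫ x in D, fderiv ℝ ψ x v * U x ∂μ := by
  have hψ' : Continuous fun x => fderiv ℝ ψ x v := (hψ.continuous_fderiv one_ne_zero).clm_apply
    continuous_const
  have hψ'D : tsupport (fun x => fderiv ℝ ψ x v) ⊆ D :=
    (tsupport_fderiv_apply_subset ℝ v).trans hψD
  rw [setIntegral_eq_integral_of_forall_compl_eq_zero fun x hx => ?_,
    setIntegral_eq_integral_of_forall_compl_eq_zero fun x hx => ?_]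
  · exact integral_mul_fderiv_eq_neg_fderiv_mul_of_integrable
      (integrable_mul_of_tsupport_subset hψ' (hc.fderiv_apply ℝ v) hψ'D hInt)
      (integrable_mul_of_tsupport_subset hψ.continuous hc hψD (hdint.apply_continuousLinearMap v))
      (integrable_mul_of_tsupport_subset hψ.continuous hc hψD hInt)
      (fun x _ => hψ.differentiable one_ne_zero x)
      fun x hx => hU.differentiableAt (hD.mem_nhds (hψD hx))
  · rw [image_eq_zero_of_notMem_tsupport fun h => hx (hψ'D h), zero_mul]
  · rw [image_eq_zero_of_notMem_tsupport fun h => hx (hψD h), zero_mul]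

theorem setIntegral_inner_gradient_eq_neg {φ U : E → ℝ} (hD : IsOpen D)
    (hU : DifferentiableOn ℝ U D) (hInt : IntegrableOn U D μ)
    (hdint : IntegrableOn (fderiv ℝ U) D μ) (hφ : ContDiff ℝ 2 φ) (hc : HasCompactSupport φ)
    (hφD : tsupport φ ⊆ D) :
    ∫ x in D, ⟪∇ φ x, ∇ U x⟫ ∂μ = -∫ x in D, Δ φ x * U x ∂μ := by
  set b := stdOrthonormalBasis ℝ E
  have hφ' : ∀ v, ContDiff ℝ 1 fun x => fderiv ℝ φ x v := fun v =>
    (hφ.fderiv_right (by norm_num)).clm_apply contDiff_const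
  have hcφ' : ∀ v, HasCompactSupport fun x => fderiv ℝ φ x v := fun v => hc.fderiv_apply ℝ v
  have hφ'D : ∀ v, tsupport (fun x => fderiv ℝ φ x v) ⊆ D := fun v =>
    (tsupport_fderiv_apply_subset ℝ v).trans hφD
  have hInt₁ : ∀ i, IntegrableOn (fun x => fderiv ℝ φ x (b i) * fderiv ℝ U x (b i)) D μ :=
    fun i => (integrable_mul_of_tsupport_subset (hφ' _).continuous (hcφ' _) (hφ'D _)
      (hdint.apply_continuousLinearMap (b i))).integrableOn
  have hInt₂ : ∀ i, IntegrableOn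
      (fun x => fderiv ℝ (fun y => fderiv ℝ φ y (b i)) x (b i) * U x) D μ :=
    fun i => (integrable_mul_of_tsupport_subset
      (((hφ' (b i)).continuous_fderiv one_ne_zero).clm_apply continuous_const)
      ((hcφ' (b i)).fderiv_apply ℝ (b i)) ((tsupport_fderiv_apply_subset ℝ (b i)).trans (hφ'D _))
      hInt).integrableOn
  simp only [inner_gradient_eq_sum b, laplacian_eq_sum_fderiv_fderiv hφ, Finset.sum_mul]
  rw [integral_finsetSum _ fun i _ => hInt₁ i, integral_finsetSum _ fun i _ => hInt₂ i,
    ← Finset.sum_neg_distrib]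
  exact Finset.sum_congr rfl fun i _ =>
    setIntegral_mul_fderiv_eq_neg hD hU hInt hdint (hφ' _) (hcφ' _) (hφ'D _) (b i)

end IntegrationByParts

/-! ### The Gross-Pitaevskii energy -/

theorem isOpen_B1 : IsOpen B1 := isOpen_ball

theorem measurableSet_B1 : MeasurableSet B1 := measurableSet_ball

theorem mem_B1_iff {x : Pt} : x ∈ B1 ↔ ‖x‖ < 1 := mem_ball_zero_iff

theorem integrableOn_B1_continuous_mul {w V : Pt → ℝ} (hw : Continuous w)
    (hV : IntegrableOn V B1) : IntegrableOn (fun x => w x * V x) B1 :=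
  integrableOn_continuous_mul_of_isBounded measurableSet_B1 isBounded_ball hw hV

theorem inner_gradient_eq_add (f g : Pt → ℝ) (x : Pt) :
    ⟪∇ f x, ∇ g x⟫ =
      fderiv ℝ f x (EuclideanSpace.single 0 1) * fderiv ℝ g x (EuclideanSpace.single 0 1) +
        fderiv ℝ f x (EuclideanSpace.single 1 1) * fderiv ℝ g x (EuclideanSpace.single 1 1) := by
  simp [inner_gradient_eq_sum (EuclideanSpace.basisFun (Fin 2) ℝ)]

section Kinetic

variable {Ω : ℝ} {Ψ : Pt → ℂ} {x : Pt}

/-- The quadratic part `|∇Ψ|² - Ω conj(Ψ) LΨ` of the energy density. -/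
def gpKinetic (Ω : ℝ) (Ψ : Pt → ℂ) (x : Pt) : ℝ :=
  ‖pd1 Ψ x‖ ^ 2 + ‖pd2 Ψ x‖ ^ 2 - Ω * (conj (Ψ x) * angMom Ψ x).re

theorem gpKinetic_add_eq_magnetic (Ω : ℝ) (Ψ : Pt → ℂ) (x : Pt) :
    gpKinetic Ω Ψ x + Ω ^ 2 / 4 * ‖x‖ ^ 2 * ‖Ψ x‖ ^ 2 =
      ‖pd1 Ψ x + Complex.I * (Ω / 2 * x 1) * Ψ x‖ ^ 2 +
        ‖pd2 Ψ x - Complex.I * (Ω / 2 * x 0) * Ψ x‖ ^ 2 := by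
  simp only [gpKinetic, angMom, EuclideanSpace.real_norm_sq_eq, Fin.sum_univ_two,
    ← Complex.normSq_eq_norm_sq, Complex.normSq_apply]
  simp only [Complex.neg_re, Complex.neg_im, Complex.mul_re, Complex.mul_im, Complex.conj_re,
    Complex.conj_im, Complex.I_re, Complex.I_im, Complex.sub_re, Complex.sub_im, Complex.add_re,
    Complex.add_im, Complex.ofReal_re, Complex.ofReal_im, Complex.div_ofNat_re,
    Complex.div_ofNat_im]
  ring

theorem neg_le_gpKinetic (Ω : ℝ) (Ψ : Pt → ℂ) {R : ℝ} (hx : ‖x‖ ≤ R) :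
    -(Ω ^ 2 * R ^ 2 / 4) * ‖Ψ x‖ ^ 2 ≤ gpKinetic Ω Ψ x := by
  have hmagnetic : 0 ≤ gpKinetic Ω Ψ x + Ω ^ 2 / 4 * ‖x‖ ^ 2 * ‖Ψ x‖ ^ 2 := by
    rw [gpKinetic_add_eq_magnetic]
    positivity
  have hR : Ω ^ 2 / 4 * ‖x‖ ^ 2 * ‖Ψ x‖ ^ 2 ≤ Ω ^ 2 / 4 * R ^ 2 * ‖Ψ x‖ ^ 2 := by gcongr
  linarith

theorem fderiv_density_apply (h : DifferentiableAt ℝ Ψ x) (v : Pt) :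
    fderiv ℝ (fun y => ‖Ψ y‖ ^ 2) x v = 2 * (conj (Ψ x) * fderiv ℝ Ψ x v).re := by
  rw [h.hasFDerivAt.norm_sq.fderiv]
  simp only [_root_.smul_apply, ContinuousLinearMap.comp_apply, innerSL_apply_apply, Complex.inner,
    mul_comm, nsmul_eq_mul, Nat.cast_ofNat]

theorem fderiv_real_smul_apply {g : Pt → ℝ} (hg : DifferentiableAt ℝ g x)
    (h : DifferentiableAt ℝ Ψ x) (v : Pt) :
    fderiv ℝ (fun y => g y • Ψ y) x v = g x * fderiv ℝ Ψ x v + fderiv ℝ g x v * Ψ x := by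
  rw [fderiv_fun_smul hg h]
  simp

theorem re_conj_mul_angMom_smul {g : Pt → ℝ} (hg : DifferentiableAt ℝ g x)
    (h : DifferentiableAt ℝ Ψ x) :
    (conj (g x • Ψ x) * angMom (fun y => g y • Ψ y) x).re =
      g x ^ 2 * (conj (Ψ x) * angMom Ψ x).re := by
  simp only [angMom, pd1, pd2, fderiv_real_smul_apply hg h]
  simp only [Complex.real_smul, Complex.neg_re, Complex.neg_im, Complex.mul_re, Complex.mul_im,
    Complex.conj_re, Complex.conj_im, Complex.I_re, Complex.I_im, Complex.sub_re, Complex.sub_im,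
    Complex.add_re, Complex.add_im, Complex.ofReal_re, Complex.ofReal_im]
  ring

theorem gpKinetic_smul {g : Pt → ℝ} (hg : DifferentiableAt ℝ g x) (h : DifferentiableAt ℝ Ψ x) :
    gpKinetic Ω (fun y => g y • Ψ y) x = g x ^ 2 * gpKinetic Ω Ψ x +
      g x * ⟪∇ g x, ∇ (fun y => ‖Ψ y‖ ^ 2) x⟫ + ‖∇ g x‖ ^ 2 * ‖Ψ x‖ ^ 2 := by
  rw [gpKinetic, gpKinetic, re_conj_mul_angMom_smul hg h, ← real_inner_self_eq_norm_sq (∇ g x),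
    inner_gradient_eq_add, inner_gradient_eq_add, fderiv_density_apply h, fderiv_density_apply h]
  simp only [pd1, pd2, fderiv_real_smul_apply hg h, ← Complex.normSq_eq_norm_sq,
    Complex.normSq_apply, Complex.add_re, Complex.add_im, Complex.mul_re, Complex.mul_im,
    Complex.conj_re, Complex.conj_im, Complex.ofReal_re, Complex.ofReal_im]
  ring

end Kinetic

/-- Wave functions of finite energy: `gpAdm` without the normalization. -/
structure HasFiniteEnergy (Ψ : Pt → ℂ) : Prop where
  differentiableOn : DifferentiableOn ℝ Ψ B1
  norm_sq : IntegrableOn (fun x => ‖Ψ x‖ ^ 2) B1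
  grad_sq : IntegrableOn (fun x => ‖pd1 Ψ x‖ ^ 2 + ‖pd2 Ψ x‖ ^ 2) B1
  norm_four : IntegrableOn (fun x => ‖Ψ x‖ ^ 4) B1
  angMom : IntegrableOn (fun x => (conj (Ψ x) * angMom Ψ x).re) B1

theorem gpAdm_iff {Ψ : Pt → ℂ} : gpAdm Ψ ↔ HasFiniteEnergy Ψ ∧ ∫ x in B1, ‖Ψ x‖ ^ 2 = 1 :=
  ⟨fun ⟨hd, h2, hg, h4, hL, h1⟩ => ⟨⟨hd, h2, hg, h4, hL⟩, h1⟩,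
    fun ⟨⟨hd, h2, hg, h4, hL⟩, h1⟩ => ⟨hd, h2, hg, h4, hL, h1⟩⟩

namespace HasFiniteEnergy

variable {Ψ : Pt → ℂ} {g : Pt → ℝ} {Ω : ℝ}

theorem differentiableAt (h : HasFiniteEnergy Ψ) {x : Pt} (hx : x ∈ B1) : DifferentiableAt ℝ Ψ x :=
  h.differentiableOn.differentiableAt (isOpen_B1.mem_nhds hx)

theorem integrableOn_gpKinetic (h : HasFiniteEnergy Ψ) (Ω : ℝ) :
    IntegrableOn (gpKinetic Ω Ψ) B1 :=
  h.grad_sq.sub (h.angMom.const_mul Ω)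

theorem gpEnergy_eq (h : HasFiniteEnergy Ψ) (ε Ω : ℝ) :
    gpEnergy ε Ω Ψ = (∫ x in B1, gpKinetic Ω Ψ x) + (∫ x in B1, ‖Ψ x‖ ^ 4) / ε ^ 2 := by
  rw [← integral_div]
  exact integral_add (h.integrableOn_gpKinetic Ω) (h.norm_four.div_const _)

theorem integrableOn_fderiv_norm_sq (h : HasFiniteEnergy Ψ) :
    IntegrableOn (fderiv ℝ fun x => ‖Ψ x‖ ^ 2) B1 := by
  refine Integrable.mono' ((h.norm_sq.const_mul 2).add h.grad_sq)
    (measurable_fderiv ℝ _).aestronglyMeasurable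
    (ae_restrict_of_forall_mem measurableSet_B1 fun x hx => ?_)
  have hpartial : ∀ v, |fderiv ℝ (fun y => ‖Ψ y‖ ^ 2) x v| ≤ ‖Ψ x‖ ^ 2 + ‖fderiv ℝ Ψ x v‖ ^ 2 := by
    intro v
    rw [fderiv_density_apply (h.differentiableAt hx), abs_mul, abs_two]
    have hre := Complex.abs_re_le_norm (conj (Ψ x) * fderiv ℝ Ψ x v)
    rw [norm_mul, Complex.norm_conj] at hre
    nlinarith [sq_nonneg (‖Ψ x‖ - ‖fderiv ℝ Ψ x v‖)]
  have hnorm : ‖fderiv ℝ (fun y => ‖Ψ y‖ ^ 2) x‖ ≤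
      |fderiv ℝ (fun y => ‖Ψ y‖ ^ 2) x (EuclideanSpace.single 0 1)| +
        |fderiv ℝ (fun y => ‖Ψ y‖ ^ 2) x (EuclideanSpace.single 1 1)| := by
    rw [← (InnerProductSpace.toDual ℝ Pt).symm.norm_map, ← gradient]
    refine abs_le_of_sq_le_sq' ?_ (by positivity) |>.2
    rw [← real_inner_self_eq_norm_sq, inner_gradient_eq_add, add_sq, sq_abs, sq_abs]
    have : 0 ≤ |fderiv ℝ (fun y => ‖Ψ y‖ ^ 2) x (EuclideanSpace.single 0 1)| *
      |fderiv ℝ (fun y => ‖Ψ y‖ ^ 2) x (EuclideanSpace.single 1 1)| := by positivity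
    linarith
  simp only [Pi.add_apply, pd1, pd2]
  linarith [hpartial (EuclideanSpace.single 0 1), hpartial (EuclideanSpace.single 1 1)]

theorem integrableOn_inner_gradient (h : HasFiniteEnergy Ψ) (hg : ContDiff ℝ 1 g) :
    IntegrableOn (fun x => ⟪∇ g x, ∇ (fun y => ‖Ψ y‖ ^ 2) x⟫) B1 := by
  have hterm : ∀ v, IntegrableOn (fun x => fderiv ℝ g x v * fderiv ℝ (fun y => ‖Ψ y‖ ^ 2) x v) B1 :=
    fun v => integrableOn_B1_continuous_mul
      ((hg.continuous_fderiv one_ne_zero).clm_apply continuous_const)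
      (h.integrableOn_fderiv_norm_sq.apply_continuousLinearMap v)
  simp only [inner_gradient_eq_add]
  exact (hterm _).add (hterm _)

theorem integrableOn_norm_gradient_sq_mul (h : HasFiniteEnergy Ψ) (hg : ContDiff ℝ 1 g) :
    IntegrableOn (fun x => ‖∇ g x‖ ^ 2 * ‖Ψ x‖ ^ 2) B1 := by
  refine integrableOn_B1_continuous_mul ?_ h.norm_sq
  simp only [gradient, LinearIsometryEquiv.norm_map]
  exact (hg.continuous_fderiv one_ne_zero).norm.pow 2

theorem integrableOn_gpKinetic_smul (h : HasFiniteEnergy Ψ) (hg : ContDiff ℝ 1 g) (Ω : ℝ) :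
    IntegrableOn (gpKinetic Ω fun y => g y • Ψ y) B1 := by
  have hexpand := ((integrableOn_B1_continuous_mul (hg.continuous.pow 2)
    (h.integrableOn_gpKinetic Ω)).add (integrableOn_B1_continuous_mul hg.continuous
      (h.integrableOn_inner_gradient hg))).add (h.integrableOn_norm_gradient_sq_mul hg)
  exact hexpand.congr_fun (fun x hx =>
    (gpKinetic_smul (hg.differentiable one_ne_zero x) (h.differentiableAt hx)).symm)
    measurableSet_B1

theorem smul (h : HasFiniteEnergy Ψ) (hg : ContDiff ℝ 1 g) :
    HasFiniteEnergy fun y => g y • Ψ y where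
  differentiableOn := (hg.differentiable one_ne_zero).differentiableOn.smul h.differentiableOn
  norm_sq := by
    simp only [norm_smul, mul_pow]
    exact integrableOn_B1_continuous_mul (hg.continuous.norm.pow 2) h.norm_sq
  grad_sq := by
    have hkinetic := h.integrableOn_gpKinetic_smul hg 0
    unfold gpKinetic at hkinetic
    simpa only [zero_mul, sub_zero] using hkinetic
  norm_four := by
    simp only [norm_smul, mul_pow]
    exact integrableOn_B1_continuous_mul (hg.continuous.norm.pow 4) h.norm_four
  angMom := (integrableOn_B1_continuous_mul (hg.continuous.pow 2) h.angMom).congr_fun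
    (fun x hx => (re_conj_mul_angMom_smul (hg.differentiable one_ne_zero x)
      (h.differentiableAt hx)).symm) measurableSet_B1

end HasFiniteEnergy

section GroundState

variable {ε Ω : ℝ} {Ψ : Pt → ℂ}

theorem neg_add_le_gpEnergy (ε Ω : ℝ) (h : gpAdm Ψ) :
    -(Ω ^ 2 / 4) + (∫ x in B1, ‖Ψ x‖ ^ 4) / ε ^ 2 ≤ gpEnergy ε Ω Ψ := by
  obtain ⟨hΨ, hnorm⟩ := gpAdm_iff.1 h
  have hkinetic : -(Ω ^ 2 * 1 ^ 2 / 4) * ∫ x in B1, ‖Ψ x‖ ^ 2 ≤ ∫ x in B1, gpKinetic Ω Ψ x := by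
    rw [← integral_const_mul]
    exact setIntegral_mono_on (hΨ.norm_sq.const_mul _) (hΨ.integrableOn_gpKinetic Ω)
      measurableSet_B1 fun x hx => neg_le_gpKinetic Ω Ψ (mem_B1_iff.1 hx).le
  rw [hnorm] at hkinetic
  rw [hΨ.gpEnergy_eq]
  linarith

theorem gpGround_le_gpEnergy (ε Ω : ℝ) (h : gpAdm Ψ) : gpGround ε Ω ≤ gpEnergy ε Ω Ψ := by
  refine csInf_le ⟨-(Ω ^ 2 / 4), ?_⟩ ⟨Ψ, h, rfl⟩
  rintro _ ⟨Φ, hΦ, rfl⟩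
  have hquartic : 0 ≤ (∫ x in B1, ‖Φ x‖ ^ 4) / ε ^ 2 :=
    div_nonneg (integral_nonneg fun x => by positivity) (sq_nonneg ε)
  linarith [neg_add_le_gpEnergy ε Ω hΦ]

theorem gpGround_mul_sq_le (ε Ω : ℝ) {Φ : Pt → ℂ} (h : HasFiniteEnergy Φ)
    (hN : 0 < ∫ x in B1, ‖Φ x‖ ^ 2) :
    gpGround ε Ω * (∫ x in B1, ‖Φ x‖ ^ 2) ^ 2 ≤
      (∫ x in B1, ‖Φ x‖ ^ 2) * (∫ x in B1, gpKinetic Ω Φ x) + (∫ x in B1, ‖Φ x‖ ^ 4) / ε ^ 2 := by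
  set N := ∫ x in B1, ‖Φ x‖ ^ 2
  set c := (√N)⁻¹
  have hc : c ^ 2 = N⁻¹ := by rw [inv_pow, sq_sqrt hN.le]
  have hfinite : HasFiniteEnergy fun x => c • Φ x := h.smul (g := fun _ => c) contDiff_const
  have hsq : ∫ x in B1, ‖c • Φ x‖ ^ 2 = 1 := by
    simp only [norm_smul, mul_pow, norm_eq_abs, sq_abs, hc, integral_const_mul]
    exact inv_mul_cancel₀ hN.ne'
  have hfour : ∫ x in B1, ‖c • Φ x‖ ^ 4 = (N⁻¹) ^ 2 * ∫ x in B1, ‖Φ x‖ ^ 4 := by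
    have hc4 : |c| ^ 4 = (N⁻¹) ^ 2 := by
      rw [← hc, ← sq_abs c, ← pow_mul]
    simp only [norm_smul, mul_pow, norm_eq_abs, hc4, integral_const_mul]
  have hkinetic : ∫ x in B1, gpKinetic Ω (fun x => c • Φ x) x =
      N⁻¹ * ∫ x in B1, gpKinetic Ω Φ x := by
    rw [← hc, ← integral_const_mul]
    refine setIntegral_congr_fun measurableSet_B1 fun x hx => ?_
    have := gpKinetic_smul (Ω := Ω) (g := fun _ => c) (differentiableAt_const c)
      (h.differentiableAt hx)
    simpa using this
  have hle := gpGround_le_gpEnergy ε Ω (gpAdm_iff.2 ⟨hfinite, hsq⟩)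
  rw [hfinite.gpEnergy_eq, hfour, hkinetic] at hle
  calc gpGround ε Ω * N ^ 2 ≤ _ := mul_le_mul_of_nonneg_right hle (sq_nonneg N)
    _ = _ := by field_simp

end GroundState

/-! ### First variation -/

theorem hasDerivAt_integral_sum_pow_mul {X : Type*} [MeasurableSpace X] {μ : Measure X} {n : ℕ}
    {f : Fin (n + 2) → X → ℝ} (hf : ∀ i, Integrable (f i) μ) :
    HasDerivAt (fun t => ∫ x, ∑ i : Fin (n + 2), t ^ (i : ℕ) * f i x ∂μ) (∫ x, f 1 x ∂μ) 0 := by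
  have hpoly : (fun t : ℝ => ∫ x, ∑ i : Fin (n + 2), t ^ (i : ℕ) * f i x ∂μ) =
      fun t => ∑ i : Fin (n + 2), t ^ (i : ℕ) * ∫ x, f i x ∂μ := by
    ext t
    rw [integral_finsetSum _ fun i _ => (hf i).const_mul _]
    simp only [integral_const_mul]
  rw [hpoly]
  refine (HasDerivAt.fun_sum fun (i : Fin (n + 2)) _ =>
    (hasDerivAt_pow (i : ℕ) (0 : ℝ)).mul_const (∫ x, f i x ∂μ)).congr_deriv ?_
  simp [Fin.sum_univ_succ]

/-- The Lagrange multiplier `μ` of the normalization constraint, as it comes out of the variational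
equation tested against `Ψ`. -/
def chemPotential (ε Ω : ℝ) (Ψ : Pt → ℂ) : ℝ :=
  gpEnergy ε Ω Ψ + (∫ x in B1, ‖Ψ x‖ ^ 4) / ε ^ 2

namespace HasFiniteEnergy

variable {Ψ : Pt → ℂ} {η : Pt → ℝ}

theorem hasDerivAt_integral_norm_sq (h : HasFiniteEnergy Ψ) (hη : ContDiff ℝ 1 η) :
    HasDerivAt (fun t => ∫ x in B1, ‖(1 + t * η x) • Ψ x‖ ^ 2)
      (2 * ∫ x in B1, η x * ‖Ψ x‖ ^ 2) 0 := by
  have hderiv := hasDerivAt_integral_sum_pow_mul (μ := volume.restrict B1)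
    (f := ![fun x => ‖Ψ x‖ ^ 2, fun x => 2 * (η x * ‖Ψ x‖ ^ 2), fun x => η x ^ 2 * ‖Ψ x‖ ^ 2])
    (by
      simp only [Fin.forall_fin_succ, Fin.forall_fin_zero]
      exact ⟨h.norm_sq, (integrableOn_B1_continuous_mul hη.continuous h.norm_sq).const_mul 2,
        integrableOn_B1_continuous_mul (hη.continuous.pow 2) h.norm_sq, trivial⟩)
  convert hderiv using 1
  · ext t
    congr! 2 with x
    calc ‖(1 + t * η x) • Ψ x‖ ^ 2 = (1 + t * η x) ^ 2 * ‖Ψ x‖ ^ 2 := by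
          rw [norm_smul, mul_pow, norm_eq_abs, sq_abs]
      _ = ‖Ψ x‖ ^ 2 + (t * (2 * (η x * ‖Ψ x‖ ^ 2)) + t ^ 2 * (η x ^ 2 * ‖Ψ x‖ ^ 2)) := by ring
      _ = _ := by simp [Fin.sum_univ_succ]
  · simp [integral_const_mul]

theorem hasDerivAt_integral_norm_four (h : HasFiniteEnergy Ψ) (hη : ContDiff ℝ 1 η) :
    HasDerivAt (fun t => ∫ x in B1, ‖(1 + t * η x) • Ψ x‖ ^ 4)
      (4 * ∫ x in B1, η x * ‖Ψ x‖ ^ 4) 0 := by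
  have hInt k := integrableOn_B1_continuous_mul (hη.continuous.pow k) h.norm_four
  have hderiv := hasDerivAt_integral_sum_pow_mul (μ := volume.restrict B1)
    (f := ![fun x => ‖Ψ x‖ ^ 4, fun x => 4 * (η x * ‖Ψ x‖ ^ 4), fun x => 6 * (η x ^ 2 * ‖Ψ x‖ ^ 4),
      fun x => 4 * (η x ^ 3 * ‖Ψ x‖ ^ 4), fun x => η x ^ 4 * ‖Ψ x‖ ^ 4])
    (by
      simp only [Fin.forall_fin_succ, Fin.forall_fin_zero]
      exact ⟨h.norm_four,
        (integrableOn_B1_continuous_mul hη.continuous h.norm_four).const_mul 4,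
        (hInt 2).const_mul 6, (hInt 3).const_mul 4, hInt 4, trivial⟩)
  convert hderiv using 1
  · ext t
    congr! 2 with x
    calc ‖(1 + t * η x) • Ψ x‖ ^ 4 = (1 + t * η x) ^ 4 * ‖Ψ x‖ ^ 4 := by
          rw [norm_smul, mul_pow, norm_eq_abs, Even.pow_abs (by decide)]
      _ = ‖Ψ x‖ ^ 4 + (t * (4 * (η x * ‖Ψ x‖ ^ 4)) + (t ^ 2 * (6 * (η x ^ 2 * ‖Ψ x‖ ^ 4)) +
          (t ^ 3 * (4 * (η x ^ 3 * ‖Ψ x‖ ^ 4)) + t ^ 4 * (η x ^ 4 * ‖Ψ x‖ ^ 4)))) := by ring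
      _ = _ := by simp [Fin.sum_univ_succ]
  · simp [integral_const_mul]

theorem hasDerivAt_integral_gpKinetic (h : HasFiniteEnergy Ψ) (hη : ContDiff ℝ 1 η) (Ω : ℝ) :
    HasDerivAt (fun t => ∫ x in B1, gpKinetic Ω (fun y => (1 + t * η y) • Ψ y) x)
      (2 * (∫ x in B1, η x * gpKinetic Ω Ψ x) +
        ∫ x in B1, ⟪∇ η x, ∇ (fun y => ‖Ψ y‖ ^ 2) x⟫) 0 := by
  have hkin := h.integrableOn_gpKinetic Ω
  have hcross := h.integrableOn_inner_gradient hη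
  have hlin := (integrableOn_B1_continuous_mul hη.continuous hkin).const_mul 2
  have hderiv := hasDerivAt_integral_sum_pow_mul (μ := volume.restrict B1)
    (f := ![fun x => gpKinetic Ω Ψ x,
      fun x => 2 * (η x * gpKinetic Ω Ψ x) + ⟪∇ η x, ∇ (fun y => ‖Ψ y‖ ^ 2) x⟫,
      fun x => η x ^ 2 * gpKinetic Ω Ψ x + η x * ⟪∇ η x, ∇ (fun y => ‖Ψ y‖ ^ 2) x⟫ +
        ‖∇ η x‖ ^ 2 * ‖Ψ x‖ ^ 2])
    (by
      simp only [Fin.forall_fin_succ, Fin.forall_fin_zero]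
      exact ⟨hkin, hlin.add hcross, ((integrableOn_B1_continuous_mul (hη.continuous.pow 2) hkin).add
        (integrableOn_B1_continuous_mul hη.continuous hcross)).add
          (h.integrableOn_norm_gradient_sq_mul hη), trivial⟩)
  convert hderiv using 1
  · ext t
    refine setIntegral_congr_fun measurableSet_B1 fun x hx => ?_
    have hηx := hη.differentiable one_ne_zero x
    have hgrad : ∇ (fun y => 1 + t * η y) x = t • ∇ η x := by
      simp only [gradient, fderiv_const_add, fderiv_const_mul hηx, map_smul]
    calc gpKinetic Ω (fun y => (1 + t * η y) • Ψ y) x =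
          (1 + t * η x) ^ 2 * gpKinetic Ω Ψ x +
            (1 + t * η x) * (t * ⟪∇ η x, ∇ (fun y => ‖Ψ y‖ ^ 2) x⟫) +
            t ^ 2 * ‖∇ η x‖ ^ 2 * ‖Ψ x‖ ^ 2 := by
          rw [gpKinetic_smul ((hηx.const_mul t).const_add 1) (h.differentiableAt hx), hgrad,
            real_inner_smul_left, norm_smul, mul_pow, norm_eq_abs, sq_abs]
      _ = gpKinetic Ω Ψ x +
          (t * (2 * (η x * gpKinetic Ω Ψ x) + ⟪∇ η x, ∇ (fun y => ‖Ψ y‖ ^ 2) x⟫) +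
            t ^ 2 * (η x ^ 2 * gpKinetic Ω Ψ x +
              η x * ⟪∇ η x, ∇ (fun y => ‖Ψ y‖ ^ 2) x⟫ + ‖∇ η x‖ ^ 2 * ‖Ψ x‖ ^ 2)) := by ring
      _ = _ := by simp [Fin.sum_univ_succ, -inner_gradient_left, -inner_gradient_right]
  · rw [← integral_const_mul]
    exact (integral_add hlin hcross).symm

theorem neg_mul_integral_le_integral_mul_gpKinetic (h : HasFiniteEnergy Ψ) (hη : Continuous η)
    (hη0 : ∀ x, 0 ≤ η x) {R : ℝ} (hηR : Function.support η ⊆ closedBall 0 R) (Ω : ℝ) :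
    -(Ω ^ 2 * R ^ 2 / 4) * (∫ x in B1, η x * ‖Ψ x‖ ^ 2) ≤ ∫ x in B1, η x * gpKinetic Ω Ψ x := by
  rw [← integral_const_mul]
  refine integral_mono ((integrableOn_B1_continuous_mul hη h.norm_sq).const_mul _)
    (integrableOn_B1_continuous_mul hη (h.integrableOn_gpKinetic Ω)) fun x => ?_
  by_cases hx : η x = 0
  · simp [hx]
  · have := neg_le_gpKinetic Ω Ψ (mem_closedBall_zero_iff.1 (hηR hx))
    simpa only [mul_left_comm] using mul_le_mul_of_nonneg_left this (hη0 x)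

end HasFiniteEnergy

namespace IsGPMinimizer

variable {ε Ω : ℝ} {Ψ : Pt → ℂ} {η : Pt → ℝ}

theorem first_variation (h : IsGPMinimizer ε Ω Ψ) (hη : ContDiff ℝ 1 η) :
    2 * (∫ x in B1, η x * gpKinetic Ω Ψ x) + (∫ x in B1, ⟪∇ η x, ∇ (fun y => ‖Ψ y‖ ^ 2) x⟫) +
      4 * (∫ x in B1, η x * ‖Ψ x‖ ^ 4) / ε ^ 2 =
        2 * chemPotential ε Ω Ψ * ∫ x in B1, η x * ‖Ψ x‖ ^ 2 := by
  obtain ⟨hΨ, hnorm⟩ := gpAdm_iff.1 h.1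
  set N : ℝ → ℝ := fun t => ∫ x in B1, ‖(1 + t * η x) • Ψ x‖ ^ 2
  set K : ℝ → ℝ := fun t => ∫ x in B1, gpKinetic Ω (fun y => (1 + t * η y) • Ψ y) x
  set Q : ℝ → ℝ := fun t => ∫ x in B1, ‖(1 + t * η x) • Ψ x‖ ^ 4
  set f : ℝ → ℝ := fun t => N t * K t + Q t / ε ^ 2 - gpGround ε Ω * N t ^ 2
  have hN : HasDerivAt N _ 0 := hΨ.hasDerivAt_integral_norm_sq hη
  have hK : HasDerivAt K _ 0 := hΨ.hasDerivAt_integral_gpKinetic hη Ω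
  have hQ : HasDerivAt Q _ 0 := hΨ.hasDerivAt_integral_norm_four hη
  have hN0 : N 0 = 1 := by simpa [N] using hnorm
  have hK0 : K 0 = gpGround ε Ω - (∫ x in B1, ‖Ψ x‖ ^ 4) / ε ^ 2 := by
    rw [← h.2, hΨ.gpEnergy_eq, add_sub_cancel_right]
    simp [K]
  have hf0 : f 0 = 0 := by simp [f, hN0, hK0, Q]
  have hmin : IsLocalMin f 0 := by
    filter_upwards [hN.continuousAt.eventually_const_lt (hN0 ▸ one_pos)] with t ht
    have hsmooth : ContDiff ℝ 1 fun x => 1 + t * η x := contDiff_const.add (contDiff_const.mul hη)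
    rw [hf0, sub_nonneg]
    exact gpGround_mul_sq_le ε Ω (hΨ.smul hsmooth) ht
  have hcrit := hmin.hasDerivAt_eq_zero
    (((hN.mul hK).add (hQ.div_const _)).sub ((hN.pow 2).const_mul (gpGround ε Ω)))
  rw [hN0, hK0] at hcrit
  rw [chemPotential, h.2]
  linear_combination hcrit

theorem isSubsolution_indicator_norm_sq (h : IsGPMinimizer ε Ω Ψ) {R κ : ℝ} (hR : R < 1)
    (hκ : chemPotential ε Ω Ψ + Ω ^ 2 * R ^ 2 / 4 ≤ -κ) :
    IsSubsolution volume (2 * κ) (closedBall 0 R) (B1.indicator fun x => ‖Ψ x‖ ^ 2) := by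
  obtain ⟨hΨ, -⟩ := gpAdm_iff.1 h.1
  have hRB : closedBall 0 R ⊆ B1 := closedBall_subset_ball hR
  refine ⟨fun x => Set.indicator_nonneg (fun y _ => sq_nonneg _) x,
    (integrable_indicator_iff measurableSet_B1).2 hΨ.norm_sq, fun x hx => ?_,
    fun φ hφ hc hφR hφ0 => ?_⟩
  · refine ((hΨ.differentiableAt (hRB hx)).continuousAt.norm.pow 2).congr ?_
    filter_upwards [isOpen_B1.mem_nhds (hRB hx)] with y hy
    rw [Set.indicator_of_mem hy, Pi.pow_apply]
  have hset (w : Pt → ℝ) : ∫ x, w x * B1.indicator (fun x => ‖Ψ x‖ ^ 2) x =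
      ∫ x in B1, w x * ‖Ψ x‖ ^ 2 := by
    rw [← integral_indicator measurableSet_B1]
    simp only [Set.indicator_mul_right]
  have hvar := h.first_variation (hφ.of_le one_le_two)
  rw [setIntegral_inner_gradient_eq_neg isOpen_B1 (hΨ.differentiableOn.norm_sq ℝ) hΨ.norm_sq
    hΨ.integrableOn_fderiv_norm_sq hφ hc (hφR.trans hRB)] at hvar
  have hkinetic := hΨ.neg_mul_integral_le_integral_mul_gpKinetic hφ.continuous hφ0
    ((subset_tsupport φ).trans hφR) Ω
  have hquartic : 0 ≤ 4 * (∫ x in B1, φ x * ‖Ψ x‖ ^ 4) / ε ^ 2 := by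
    have : 0 ≤ ∫ x in B1, φ x * ‖Ψ x‖ ^ 4 :=
      integral_nonneg fun x => mul_nonneg (hφ0 x) (by positivity)
    positivity
  have hmass : 0 ≤ ∫ x in B1, φ x * ‖Ψ x‖ ^ 2 :=
    integral_nonneg fun x => mul_nonneg (hφ0 x) (sq_nonneg _)
  rw [hset, hset]
  nlinarith

end IsGPMinimizer

/-! ### The giant vortex -/

theorem setIntegral_ball_norm_pow {E : Type*} [NormedAddCommGroup E] [NormedSpace ℝ E]
    [FiniteDimensional ℝ E] [Nontrivial E] [MeasurableSpace E] [BorelSpace E] (μ : Measure E)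
    [μ.IsAddHaarMeasure] (n : ℕ) :
    ∫ x in ball (0 : E) 1, ‖x‖ ^ n ∂μ =
      finrank ℝ E / (n + finrank ℝ E) * μ.real (ball 0 1) := by
  have hd : 0 < finrank ℝ E := finrank_pos
  have hball : (ball (0 : E) 1).indicator (fun x => ‖x‖ ^ n) =
      fun x => (Set.Iio (1 : ℝ)).indicator (fun r => r ^ n) ‖x‖ := by
    ext x
    simp [Set.indicator]
  have hradial : ∫ r in Set.Ioi (0 : ℝ), r ^ (finrank ℝ E - 1) •
      (Set.Iio (1 : ℝ)).indicator (fun r => r ^ n) r = 1 / (n + finrank ℝ E) := by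
    simp only [smul_eq_mul, ← Set.indicator_mul_right _ fun r : ℝ => r ^ (finrank ℝ E - 1),
      ← pow_add]
    rw [setIntegral_indicator measurableSet_Iio, Set.Ioi_inter_Iio, ← integral_Ioc_eq_integral_Ioo,
      ← intervalIntegral.integral_of_le zero_le_one, integral_pow, one_pow, zero_pow (by omega),
      sub_zero, show finrank ℝ E - 1 + n = n + finrank ℝ E - 1 by omega,
      Nat.cast_pred (by omega), sub_add_cancel, Nat.cast_add]
  rw [← integral_indicator measurableSet_ball, hball,
    integral_fun_norm_addHaar μ fun r => (Set.Iio (1 : ℝ)).indicator (fun r => r ^ n) r, hradial]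
  simp only [nsmul_eq_mul, smul_eq_mul]
  ring

theorem setIntegral_B1_norm_pow (p : ℕ) : ∫ x in B1, ‖x‖ ^ (2 * p) = π / (p + 1) := by
  have hvol : volume.real (ball (0 : Pt) 1) = π := by
    simp [Measure.real, pi_pos.le]
  rw [B1, setIntegral_ball_norm_pow, hvol, finrank_euclideanSpace_fin]
  push_cast
  field_simp

section GiantVortex

variable {p k : ℕ} {x : Pt}

/-- The identification `x ↦ x₁ + i x₂` of the plane with `ℂ`. -/
def complexCoord : Pt ≃ₗᵢ[ℝ] ℂ := Complex.orthonormalBasisOneI.repr.symm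

theorem complexCoord_single_zero : complexCoord (EuclideanSpace.single 0 1) = 1 := by
  simp [complexCoord]

theorem complexCoord_single_one : complexCoord (EuclideanSpace.single 1 1) = Complex.I := by
  simp [complexCoord]

theorem complexCoord_rotate (x : Pt) :
    complexCoord (x 0 • EuclideanSpace.single 1 1 - x 1 • EuclideanSpace.single 0 1) =
      Complex.I * complexCoord x := by
  have hcoord : complexCoord x = x 0 + x 1 * Complex.I := by simp [complexCoord]
  rw [map_sub, map_smul, map_smul, complexCoord_single_zero, complexCoord_single_one, hcoord,
    Complex.real_smul, Complex.real_smul]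
  linear_combination -(x 1 : ℂ) * Complex.I_sq

/-- The giant vortex `|z|^p (z / |z|)^(p + 2k) = z^(p + k) conj(z)^(-k)`: a profile concentrated
near the unit circle, with phase circulation `p + 2k`. -/
def giantVortex (p k : ℕ) (x : Pt) : ℂ :=
  complexCoord x ^ (p + k : ℤ) * conj (complexCoord x) ^ (-k : ℤ)

theorem norm_giantVortex (hp : p ≠ 0) (k : ℕ) (x : Pt) : ‖giantVortex p k x‖ = ‖x‖ ^ p := by
  rcases eq_or_ne x 0 with rfl | hx
  · simp [giantVortex, hp, zero_zpow, show (p + k : ℤ) ≠ 0 by omega]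
  · rw [giantVortex, norm_mul, norm_zpow, norm_zpow, Complex.norm_conj,
      LinearIsometryEquiv.norm_map, ← zpow_add₀ (norm_ne_zero_iff.2 hx), add_neg_cancel_right,
      zpow_natCast]

theorem hasFDerivAt_giantVortex_zero (hp : 2 ≤ p) (k : ℕ) :
    HasFDerivAt (giantVortex p k) (0 : Pt →L[ℝ] ℂ) 0 := by
  refine Asymptotics.IsBigO.hasFDerivAt (n := p) ?_ hp
  refine Asymptotics.IsBigO.of_norm_le fun x => ?_
  rw [norm_giantVortex (by omega), sub_zero]

theorem exists_hasFDerivAt_giantVortex (p k : ℕ) (hx : x ≠ 0) :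
    ∃ L : Pt →L[ℝ] ℂ, HasFDerivAt (giantVortex p k) L x ∧ ∀ v, L v =
      giantVortex p k x * ((p + k) * complexCoord v / complexCoord x -
        k * conj (complexCoord v) / conj (complexCoord x)) := by
  have hz : complexCoord x ≠ 0 := by simpa using hx
  have hz' : conj (complexCoord x) ≠ 0 := by simpa using hx
  have hzc : HasFDerivAt (fun y : Pt => complexCoord y) _ x :=
    complexCoord.toContinuousLinearEquiv.hasFDerivAt
  have hconj := Complex.conjCLE.hasFDerivAt.comp x hzc
  have hpow :=
    ((hasDerivAt_zpow (p + k : ℤ) _ (Or.inl hz)).hasFDerivAt.restrictScalars ℝ).comp x hzc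
  have hpow' :=
    ((hasDerivAt_zpow (-k : ℤ) _ (Or.inl hz')).hasFDerivAt.restrictScalars ℝ).comp x hconj
  refine ⟨_, hpow.mul hpow', fun v => ?_⟩
  simp only [giantVortex, Function.comp_apply, zpow_sub_one₀ hz, zpow_sub_one₀ hz',
    _root_.add_apply, _root_.smul_apply, ContinuousLinearMap.comp_apply,
    ContinuousLinearEquiv.coe_coe, LinearIsometryEquiv.coe_toContinuousLinearEquiv,
    ContinuousAlgEquiv.coeCLE_apply, Complex.conjCAE_apply,
    ContinuousLinearMap.coe_restrictScalars', ContinuousLinearMap.toSpanSingleton_apply,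
    smul_eq_mul, Int.cast_add, Int.cast_neg, Int.cast_natCast]
  field_simp
  ring

theorem differentiable_giantVortex (hp : 2 ≤ p) (k : ℕ) : Differentiable ℝ (giantVortex p k) := by
  intro x
  rcases eq_or_ne x 0 with rfl | hx
  · exact (hasFDerivAt_giantVortex_zero hp k).differentiableAt
  · obtain ⟨L, hL, -⟩ := exists_hasFDerivAt_giantVortex p k hx
    exact hL.differentiableAt

theorem norm_sq_pd_giantVortex (hp : 2 ≤ p) (k : ℕ) (x : Pt) :
    ‖pd1 (giantVortex p k) x‖ ^ 2 + ‖pd2 (giantVortex p k) x‖ ^ 2 =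
      (p ^ 2 + (p + 2 * k) ^ 2) * ‖x‖ ^ (2 * (p - 1)) := by
  rcases eq_or_ne x 0 with rfl | hx
  · simp [pd1, pd2, (hasFDerivAt_giantVortex_zero hp k).fderiv, show p - 1 ≠ 0 by omega]
  obtain ⟨L, hL, hLv⟩ := exists_hasFDerivAt_giantVortex p k hx
  set z := complexCoord x with hz
  set u : ℂ := (p + k) / z
  set w : ℂ := k / conj z
  have hz0 : ‖z‖ ≠ 0 := by simpa [hz] using hx
  have hu : ‖u‖ ^ 2 = (p + k) ^ 2 / ‖z‖ ^ 2 := by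
    rw [norm_div, div_pow, ← Nat.cast_add, Complex.norm_natCast, Nat.cast_add]
  have hw : ‖w‖ ^ 2 = k ^ 2 / ‖z‖ ^ 2 := by
    rw [norm_div, div_pow, Complex.norm_natCast, Complex.norm_conj]
  have hpd1 : pd1 (giantVortex p k) x = giantVortex p k x * (u - w) := by
    simp [pd1, hL.fderiv, hLv, complexCoord_single_zero, u, w]
  have hpd2 : pd2 (giantVortex p k) x = Complex.I * (giantVortex p k x * (u + w)) := by
    simp only [pd2, hL.fderiv, hLv, complexCoord_single_one, Complex.conj_I, u, w]
    ring
  rw [hpd1, hpd2]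
  simp only [norm_mul, mul_pow, Complex.norm_I, one_mul]
  have hpar := parallelogram_law_with_norm ℝ u w
  have hpow : ‖x‖ ^ p = ‖x‖ ^ (p - 1) * ‖x‖ := (pow_sub_one_mul (by omega) _).symm
  rw [norm_giantVortex (by omega), hpow]
  have hzx : ‖z‖ = ‖x‖ := LinearIsometryEquiv.norm_map _ _
  rw [hzx] at hu hw hz0
  calc _ = (‖x‖ ^ (p - 1)) ^ 2 * ‖x‖ ^ 2 * (2 * (‖u‖ ^ 2 + ‖w‖ ^ 2)) := by
        linear_combination (‖x‖ ^ (p - 1)) ^ 2 * ‖x‖ ^ 2 * hpar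
    _ = _ := by rw [hu, hw]; field_simp; ring

theorem angMom_giantVortex (p k : ℕ) (hx : x ≠ 0) :
    angMom (giantVortex p k) x = (p + 2 * k) * giantVortex p k x := by
  obtain ⟨L, hL, hLv⟩ := exists_hasFDerivAt_giantVortex p k hx
  have hz : complexCoord x ≠ 0 := by simpa using hx
  have hz' : conj (complexCoord x) ≠ 0 := by simpa using hx
  calc angMom (giantVortex p k) x = -Complex.I *
        L (x 0 • EuclideanSpace.single 1 1 - x 1 • EuclideanSpace.single 0 1) := by
        simp [angMom, pd1, pd2, hL.fderiv]
    _ = -Complex.I ^ 2 * (p + 2 * k) * giantVortex p k x := by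
        rw [hLv, complexCoord_rotate, map_mul, Complex.conj_I]
        field_simp
        ring
    _ = _ := by rw [Complex.I_sq]; ring

theorem re_conj_mul_angMom_giantVortex (hp : p ≠ 0) (k : ℕ) (x : Pt) :
    (conj (giantVortex p k x) * angMom (giantVortex p k) x).re =
      (p + 2 * k) * ‖x‖ ^ (2 * p) := by
  rcases eq_or_ne x 0 with rfl | hx
  · have hzero : giantVortex p k 0 = 0 := by simp [← norm_eq_zero, norm_giantVortex hp, hp]
    simp [hzero, hp]
  · rw [angMom_giantVortex p k hx, mul_left_comm, ← Complex.normSq_eq_conj_mul_self,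
      Complex.normSq_eq_norm_sq, norm_giantVortex hp, ← pow_mul, mul_comm p 2]
    norm_cast

theorem integrableOn_B1_norm_pow (n : ℕ) : IntegrableOn (fun x => ‖x‖ ^ n) B1 :=
  ((continuous_norm.pow n).continuousOn.integrableOn_compact
    (isCompact_closedBall 0 1)).mono_set ball_subset_closedBall

theorem hasFiniteEnergy_giantVortex (hp : 2 ≤ p) (k : ℕ) : HasFiniteEnergy (giantVortex p k) where
  differentiableOn := (differentiable_giantVortex hp k).differentiableOn
  norm_sq := by
    simp only [norm_giantVortex (show p ≠ 0 by omega), ← pow_mul]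
    exact integrableOn_B1_norm_pow _
  grad_sq := by
    simp only [norm_sq_pd_giantVortex hp]
    exact (integrableOn_B1_norm_pow _).const_mul _
  norm_four := by
    simp only [norm_giantVortex (show p ≠ 0 by omega), ← pow_mul]
    exact integrableOn_B1_norm_pow _
  angMom := by
    simp only [re_conj_mul_angMom_giantVortex (show p ≠ 0 by omega)]
    exact (integrableOn_B1_norm_pow _).const_mul _

theorem gpGround_le_giantVortex (ε Ω : ℝ) (hp : 2 ≤ p) (k : ℕ) :
    gpGround ε Ω ≤ (p + 1) / p * (p ^ 2 + (p + 2 * k) ^ 2) - Ω * (p + 2 * k) +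
      (p + 1) ^ 2 / (π * (2 * p + 1)) / ε ^ 2 := by
  have hp0 : p ≠ 0 := by omega
  have hΦ := hasFiniteEnergy_giantVortex hp k
  have hN : ∫ x in B1, ‖giantVortex p k x‖ ^ 2 = π / (p + 1) := by
    simp only [norm_giantVortex hp0, ← pow_mul, mul_comm p 2, setIntegral_B1_norm_pow]
  have hQ : ∫ x in B1, ‖giantVortex p k x‖ ^ 4 = π / (2 * p + 1) := by
    simp only [norm_giantVortex hp0, ← pow_mul, show p * 4 = 2 * (2 * p) by ring,
      setIntegral_B1_norm_pow]
    push_cast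
    rfl
  have hK : ∫ x in B1, gpKinetic Ω (giantVortex p k) x =
      (p ^ 2 + (p + 2 * k) ^ 2) * (π / p) - Ω * ((p + 2 * k) * (π / (p + 1))) := by
    simp only [gpKinetic, norm_sq_pd_giantVortex hp, re_conj_mul_angMom_giantVortex hp0]
    rw [integral_sub ((integrableOn_B1_norm_pow _).const_mul _)
      (((integrableOn_B1_norm_pow _).const_mul _).const_mul _)]
    simp only [integral_const_mul, setIntegral_B1_norm_pow, Nat.cast_pred (show 0 < p by omega),
      sub_add_cancel]
  have hle := gpGround_mul_sq_le ε Ω hΦ (hN ▸ by positivity)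
  rw [hN, hQ, hK, ← le_div_iff₀ (by positivity)] at hle
  refine hle.trans_eq ?_
  field_simp

end GiantVortex

/-! ### Decay of minimizers -/

theorem sq_mul_exp_neg_le {t : ℝ} (ht : 0 ≤ t) : t ^ 2 * exp (-t) ≤ 2 := by
  rw [exp_neg, ← div_eq_mul_inv, div_le_iff₀ (exp_pos t)]
  linarith [quadratic_le_exp_of_nonneg ht]

section EnergyUpperBound

variable {ε Ω Ω₁ Y : ℝ}

theorem gpGround_le_of_two_mul_le {p : ℕ} (hp : 2 ≤ p) (hpΩ : 2 * p ≤ Ω) (hε : 0 < ε)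
    (hε1 : ε ≤ 1) :
    gpGround ε Ω ≤ -(Ω ^ 2 / 4) + 4 * p ^ 2 / ε ^ 2 + Ω ^ 2 / (4 * p) := by
  have hp' : (2 : ℝ) ≤ p := by exact_mod_cast hp
  set k := ⌊(Ω / 2 - p) / 2⌋₊
  set m : ℝ := p + 2 * k
  have hm_le : m ≤ Ω / 2 := by
    linarith [Nat.floor_le (show 0 ≤ (Ω / 2 - p) / 2 by linarith)]
  have hle_m : Ω / 2 - 2 ≤ m := by linarith [Nat.lt_floor_add_one ((Ω / 2 - p) / 2)]
  have : 0 ≤ m := by positivity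
  have hrotation : m ^ 2 - Ω * m ≤ 4 - Ω ^ 2 / 4 := by nlinarith
  have hexcess : m ^ 2 / p ≤ Ω ^ 2 / (4 * p) := by
    rw [← div_div]
    gcongr
    nlinarith
  have hinv : 1 ≤ 1 / ε ^ 2 := (one_le_div (by positivity)).2 (pow_le_one₀ hε.le hε1)
  have hprofile : (p : ℝ) ^ 2 + p + 4 ≤ 5 / 2 * p ^ 2 * (1 / ε ^ 2) := by nlinarith
  have hquartic : ((p : ℝ) + 1) ^ 2 / (π * (2 * p + 1)) ≤ p ^ 2 := by
    rw [div_le_iff₀ (by positivity)]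
    nlinarith [pi_gt_three, mul_le_mul_of_nonneg_right pi_gt_three.le
      (show 0 ≤ (p : ℝ) ^ 2 * (2 * p + 1) by positivity)]
  calc gpGround ε Ω ≤ (p + 1) / p * (p ^ 2 + m ^ 2) - Ω * m +
        (p + 1) ^ 2 / (π * (2 * p + 1)) / ε ^ 2 := gpGround_le_giantVortex ε Ω hp k
    _ = p ^ 2 + p + (m ^ 2 - Ω * m) + m ^ 2 / p +
        (p + 1) ^ 2 / (π * (2 * p + 1)) * (1 / ε ^ 2) := by field_simp; ring
    _ ≤ p ^ 2 + p + (4 - Ω ^ 2 / 4) + Ω ^ 2 / (4 * p) + p ^ 2 * (1 / ε ^ 2) := by gcongr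
    _ ≤ -(Ω ^ 2 / 4) + 4 * (p ^ 2 * (1 / ε ^ 2)) + Ω ^ 2 / (4 * p) := by
        nlinarith [show 0 ≤ (p : ℝ) ^ 2 * (1 / ε ^ 2) by positivity]
    _ = _ := by ring

theorem gpGround_le_of_rapid (hε : 0 < ε) (hε1 : ε ≤ 1) (hY : 0 < Y) (hΩ₁ : 0 < Ω₁)
    (hΩ : Ω₁ ≤ Ω * (ε * Y ^ 4)) (hY16 : Y ≤ 1 / 16) (hY3 : 1024 * Y ^ 3 ≤ Ω₁ ^ 2)
    (hY2 : 4 * Y ^ 2 ≤ Ω₁) :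
    gpGround ε Ω ≤ -(Ω ^ 2 / 4) + Ω ^ 2 * Y / 32 := by
  set p := ⌈1 / Y ^ 2⌉₊
  have hinv : 256 ≤ 1 / Y ^ 2 := by
    rw [le_div_iff₀ (by positivity)]
    nlinarith
  have hp_ge : 1 / Y ^ 2 ≤ p := Nat.le_ceil _
  have hp_le : (p : ℝ) ≤ 2 / Y ^ 2 := by
    have := Nat.ceil_lt_add_one (show 0 ≤ 1 / Y ^ 2 by positivity)
    linarith [show 2 / Y ^ 2 = 2 * (1 / Y ^ 2) by ring]
  have hΩ_ge : Ω₁ / (ε * Y ^ 4) ≤ Ω := (div_le_iff₀ (by positivity)).2 hΩ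
  have hpΩ : 2 * p ≤ Ω :=
    calc 2 * (p : ℝ) ≤ 4 * Y ^ 2 / Y ^ 4 := by
          refine (mul_le_mul_of_nonneg_left hp_le two_pos.le).trans_eq ?_
          field_simp
          norm_num
      _ ≤ Ω₁ / (ε * Y ^ 4) := by
          gcongr
          exact mul_le_of_le_one_left (by positivity) hε1
      _ ≤ Ω := hΩ_ge
  have hprofile : 4 * p ^ 2 / ε ^ 2 ≤ Ω ^ 2 * Y / 64 :=
    calc 4 * p ^ 2 / ε ^ 2 ≤ 4 * (2 / Y ^ 2) ^ 2 / ε ^ 2 := by gcongr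
      _ = 1024 * Y ^ 3 / (ε * Y ^ 4) ^ 2 * Y / 64 := by field_simp; norm_num
      _ ≤ Ω₁ ^ 2 / (ε * Y ^ 4) ^ 2 * Y / 64 := by gcongr
      _ = (Ω₁ / (ε * Y ^ 4)) ^ 2 * Y / 64 := by rw [div_pow]
      _ ≤ Ω ^ 2 * Y / 64 := by gcongr
  have hexcess : Ω ^ 2 / (4 * p) ≤ Ω ^ 2 * Y / 64 :=
    calc Ω ^ 2 / (4 * p) ≤ Ω ^ 2 / (4 * (1 / Y ^ 2)) := by gcongr
      _ = Ω ^ 2 * Y * Y / 4 := by field_simp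
      _ ≤ Ω ^ 2 * Y * (1 / 16) / 4 := by gcongr
      _ = Ω ^ 2 * Y / 64 := by ring
  have hp2 : 2 ≤ p := by
    have : (2 : ℝ) ≤ p := by linarith
    exact_mod_cast this
  linarith [gpGround_le_of_two_mul_le hp2 hpΩ hε hε1]

end EnergyUpperBound

namespace IsGPMinimizer

variable {ε Ω Ω₁ Y : ℝ} {Ψ : Pt → ℂ} {x : Pt}

theorem chemPotential_le (h : IsGPMinimizer ε Ω Ψ) :
    chemPotential ε Ω Ψ ≤ 2 * gpGround ε Ω + Ω ^ 2 / 4 := by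
  rw [chemPotential, h.2]
  linarith [h.2 ▸ neg_add_le_gpEnergy ε Ω h.1]

theorem norm_sq_le_mul_exp_neg (h : IsGPMinimizer ε Ω Ψ) {R K : ℝ} (hR : R < 1) (hK : 0 < K)
    (hchem : chemPotential ε Ω Ψ + Ω ^ 2 * R ^ 2 / 4 ≤ -K ^ 2) (hx : ‖x‖ + 3 / K ≤ R) :
    ‖Ψ x‖ ^ 2 ≤ 2 / (9 * ballMass (volume : Measure Pt) 2) * K ^ 2 *
      exp (-(K * (R - ‖x‖) / 6)) := by
  have hS : 0 < 3 / K := by positivity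
  have hball : closedBall x (R - ‖x‖) ⊆ closedBall 0 R :=
    closedBall_subset_closedBall' (by rw [dist_zero_right, sub_add_cancel])
  have hx1 : x ∈ B1 := mem_B1_iff.2 (by linarith)
  have hmass : ∫ y, B1.indicator (fun y => ‖Ψ y‖ ^ 2) y = 1 := by
    rw [integral_indicator measurableSet_B1, (gpAdm_iff.1 h.1).2]
  have hdecay := (h.isSubsolution_indicator_norm_sq hR hchem).le_mul_exp_neg (by positivity) hS
    (by rw [finrank_euclideanSpace_fin]; field_simp; norm_num) (by linarith) hball
  rw [Set.indicator_of_mem hx1, hmass, finrank_euclideanSpace_fin] at hdecay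
  convert hdecay using 2
  · field_simp
    norm_num
  · field_simp
    norm_num

theorem chemPotential_add_le_of_rapid (h : IsGPMinimizer ε Ω Ψ) (hY : 0 < Y) (hY1 : Y ≤ 1)
    (hE : gpGround ε Ω ≤ -(Ω ^ 2 / 4) + Ω ^ 2 * Y / 32) :
    chemPotential ε Ω Ψ + Ω ^ 2 * (1 - Y / 2) ^ 2 / 4 ≤ -(Ω * Y / 4) ^ 2 := by
  have hgain : 0 ≤ Ω ^ 2 * Y * (3 / 16 - Y / 8) := mul_nonneg (by positivity) (by linarith)
  linear_combination h.chemPotential_le + 2 * hE + hgain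

theorem norm_sq_le_mul_exp_neg_mul_exp_neg (h : IsGPMinimizer ε Ω Ψ) {K : ℝ} (hY : 0 < Y)
    (hKY : 6 ≤ K * Y) (hchem : chemPotential ε Ω Ψ + Ω ^ 2 * (1 - Y / 2) ^ 2 / 4 ≤ -K ^ 2)
    (hx : ‖x‖ ≤ 1 - Y) :
    ‖Ψ x‖ ^ 2 ≤ 256 / ballMass (volume : Measure Pt) 2 / Y ^ 2 * exp (-(K * Y / 24)) *
      exp (-(K * (1 - Y - ‖x‖) / 6)) := by
  have hK : 0 < K := pos_of_mul_pos_left (by linarith) hY.le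
  have hscale : 3 / K ≤ Y / 2 := by
    rw [div_le_iff₀ hK]
    linarith
  have hmass : 0 ≤ ballMass (volume : Measure Pt) 2 := (ballMass_pos volume two_ne_zero).le
  calc ‖Ψ x‖ ^ 2
      ≤ 2 / (9 * ballMass (volume : Measure Pt) 2) * K ^ 2 *
          exp (-(K * (1 - Y / 2 - ‖x‖) / 6)) :=
        h.norm_sq_le_mul_exp_neg (by linarith) hK hchem (by linarith)
    _ = 128 / ballMass (volume : Measure Pt) 2 / Y ^ 2 *
          ((K * Y / 24) ^ 2 * exp (-(K * Y / 24))) * exp (-(K * Y / 24)) *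
          exp (-(K * (1 - Y - ‖x‖) / 6)) := by
        rw [show -(K * (1 - Y / 2 - ‖x‖) / 6) =
          -(K * Y / 24) + -(K * Y / 24) + -(K * (1 - Y - ‖x‖) / 6) by ring, exp_add, exp_add]
        field_simp
        ring
    _ ≤ 128 / ballMass (volume : Measure Pt) 2 / Y ^ 2 * 2 * exp (-(K * Y / 24)) *
          exp (-(K * (1 - Y - ‖x‖) / 6)) := by
        gcongr
        exact sq_mul_exp_neg_le (by linarith)
    _ = _ := by ring

theorem norm_sq_le_of_rapid (h : IsGPMinimizer ε Ω Ψ) (hε : 0 < ε) (hε1 : ε ≤ 1) (hY : 0 < Y)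
    (hΩ₁ : 0 < Ω₁) (hΩ : Ω₁ ≤ Ω * (ε * Y ^ 4)) (hY16 : Y ≤ 1 / 16)
    (hY3 : 1024 * Y ^ 3 ≤ Ω₁ ^ 2) (hY2 : 4 * Y ^ 2 ≤ Ω₁) (hεΩ₁ : 24 * ε ≤ Ω₁)
    (hx : ‖x‖ ≤ 1 - Y) :
    ‖Ψ x‖ ^ 2 ≤ 256 / ballMass (volume : Measure Pt) 2 / Y ^ 2 * exp (-(Ω₁ / 96 / ε)) *
      exp (-(Ω₁ / 24 * (1 - Y - ‖x‖) ^ 2 / (ε * Y ^ 2))) := by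
  set d := 1 - Y - ‖x‖
  have hd0 : 0 ≤ d := sub_nonneg.2 hx
  have hd1 : d ≤ 1 := by linarith [norm_nonneg x]
  have hrate : Ω₁ / (4 * ε * Y ^ 2) ≤ Ω * Y / 4 * Y := by
    rw [div_le_iff₀ (by positivity)]
    linarith
  have hrate_mul : Ω₁ / (4 * ε) ≤ Ω * Y / 4 * Y := by
    refine le_trans (div_le_div_of_nonneg_left hΩ₁.le (by positivity) ?_) hrate
    exact mul_le_of_le_one_right (by positivity) (pow_le_one₀ hY.le (by linarith))
  have hK : 0 ≤ Ω * Y / 4 :=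
    nonneg_of_mul_nonneg_left ((by positivity : 0 ≤ Ω₁ / (4 * ε)).trans hrate_mul) hY
  have hrate_le : Ω₁ / (4 * ε * Y ^ 2) ≤ Ω * Y / 4 :=
    hrate.trans (mul_le_of_le_one_right hK (by linarith))
  have h6 : 6 ≤ Ω₁ / (4 * ε) := (le_div_iff₀ (by positivity)).2 (by linarith)
  have hchem := h.chemPotential_add_le_of_rapid hY (by linarith)
    (gpGround_le_of_rapid hε hε1 hY hΩ₁ hΩ hY16 hY3 hY2)
  refine (h.norm_sq_le_mul_exp_neg_mul_exp_neg hY (h6.trans hrate_mul) hchem hx).trans ?_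
  have hmass : 0 ≤ ballMass (volume : Measure Pt) 2 := (ballMass_pos volume two_ne_zero).le
  gcongr ?_ * exp (-?_) * exp (-?_)
  · calc Ω₁ / 96 / ε = Ω₁ / (4 * ε) / 24 := by field_simp; norm_num
      _ ≤ _ := by gcongr
  · calc Ω₁ / 24 * d ^ 2 / (ε * Y ^ 2) = Ω₁ / (4 * ε * Y ^ 2) * d ^ 2 / 6 := by
          field_simp
          ring
      _ ≤ Ω * Y / 4 * d / 6 := by
        gcongr
        exact pow_le_of_le_one hd0 hd1 two_ne_zero

end IsGPMinimizer

theorem tendsto_exp_neg_div_div_rpow_nhdsGT_zero {a : ℝ} (ha : 0 < a) (s : ℝ) :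
    Tendsto (fun ε : ℝ => exp (-(a / ε)) / ε ^ s) (𝓝[>] 0) (𝓝 0) := by
  refine ((tendsto_rpow_mul_exp_neg_mul_atTop_nhds_zero s a ha).comp
    tendsto_inv_nhdsGT_zero).congr' ?_
  filter_upwards [self_mem_nhdsWithin] with ε (hε : 0 < ε)
  rw [Function.comp_apply, inv_rpow hε.le, neg_mul, div_eq_mul_inv a, div_eq_inv_mul]

theorem eventually_div_mul_exp_neg_div_le {a : ℝ} (ha : 0 < a) (B : ℝ) (r s : ℝ) :
    ∀ᶠ ε : ℝ in 𝓝[>] 0, B / ε ^ r * exp (-(a / ε)) ≤ ε ^ s * |log ε| := by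
  have hlim : Tendsto (fun ε : ℝ => B * (exp (-(a / ε)) / ε ^ (r + s))) (𝓝[>] 0) (𝓝 0) := by
    simpa only [mul_zero] using (tendsto_exp_neg_div_div_rpow_nhdsGT_zero ha (r + s)).const_mul B
  filter_upwards [self_mem_nhdsWithin, hlim.eventually_le_const one_pos,
    (tendsto_abs_atBot_atTop.comp tendsto_log_nhdsGT_zero).eventually_ge_atTop 1]
    with ε (hε : 0 < ε) hle hlog
  calc B / ε ^ r * exp (-(a / ε)) = ε ^ s * (B * (exp (-(a / ε)) / ε ^ (r + s))) := by
        rw [rpow_add hε]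
        field_simp
    _ ≤ ε ^ s * |log ε| := by
        gcongr
        exact hle.trans hlog

theorem eventually_norm_sq_le_of_isGPMinimizer {Ω₁ β : ℝ} (hΩ₁ : 0 < Ω₁) (hβ : 0 < β) :
    ∀ᶠ ε : ℝ in 𝓝[>] 0, ∀ Ω, Ω₁ / ε ^ (1 + β) ≤ Ω → ∀ Ψ, IsGPMinimizer ε Ω Ψ →
      ∀ x : Pt, ‖x‖ ≤ 1 - ε ^ (β / 4) →
        ‖Ψ x‖ ^ 2 ≤ ε ^ (β / 3) * |log ε| *
          exp (-(Ω₁ / 24 * (1 - ε ^ (β / 4) - ‖x‖) ^ 2 / ε ^ (1 + β / 2))) := by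
  have hY : Tendsto (fun ε : ℝ => ε ^ (β / 4)) (𝓝[>] 0) (𝓝 0) := by
    simpa only [zero_rpow (show β / 4 ≠ 0 by positivity)] using
      (continuousAt_rpow_const 0 (β / 4) (Or.inr (by positivity))).tendsto.mono_left
        nhdsWithin_le_nhds
  have hε : Tendsto (fun ε : ℝ => ε) (𝓝[>] 0) (𝓝 0) := tendsto_id'.2 nhdsWithin_le_nhds
  have hY3 : Tendsto (fun ε : ℝ => 1024 * (ε ^ (β / 4)) ^ 3) (𝓝[>] 0) (𝓝 0) := by
    simpa using (hY.pow 3).const_mul 1024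
  have hY2 : Tendsto (fun ε : ℝ => 4 * (ε ^ (β / 4)) ^ 2) (𝓝[>] 0) (𝓝 0) := by
    simpa using (hY.pow 2).const_mul 4
  have h24 : Tendsto (fun ε : ℝ => 24 * ε) (𝓝[>] 0) (𝓝 0) := by
    simpa using hε.const_mul 24
  filter_upwards [self_mem_nhdsWithin, hε.eventually_le_const one_pos,
    hY.eventually_le_const (show (0 : ℝ) < 1 / 16 by norm_num),
    hY3.eventually_le_const (pow_pos hΩ₁ 2), hY2.eventually_le_const hΩ₁,
    h24.eventually_le_const hΩ₁, eventually_div_mul_exp_neg_div_le (show 0 < Ω₁ / 96 by positivity)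
      (256 / ballMass (volume : Measure Pt) 2) (β / 2) (β / 3)]
    with ε (hε : 0 < ε) hε1 hY16 hY3 hY2 hεΩ₁ hsmall Ω hΩ Ψ hΨ x hx
  have hpow2 : (ε ^ (β / 4)) ^ 2 = ε ^ (β / 2) := by
    rw [← rpow_mul_natCast hε.le]
    ring_nf
  have hpow4 : (ε ^ (β / 4)) ^ 4 = ε ^ β := by
    rw [← rpow_mul_natCast hε.le]
    ring_nf
  have hrapid : Ω₁ ≤ Ω * (ε * (ε ^ (β / 4)) ^ 4) := by
    rwa [hpow4, ← rpow_one_add' hε.le (by positivity), ← div_le_iff₀ (by positivity)]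
  have hbound := hΨ.norm_sq_le_of_rapid hε hε1 (by positivity) hΩ₁ hrapid hY16 hY3 hY2 hεΩ₁ hx
  rw [hpow2, ← rpow_one_add' hε.le (by positivity)] at hbound
  exact hbound.trans (by gcongr)

theorem stmt19_general {Ω₁ α β : ℝ} (hΩ₁ : 0 < Ω₁) (hβ : 0 < β) (hβα : β ≤ α) :
    ∃ ε₀ : ℝ, 0 < ε₀ ∧ ∀ ε : ℝ, 0 < ε → ε < ε₀ →
      ∀ Ψ : Pt → ℂ, IsGPMinimizer ε (Ω₁ / ε ^ (1 + α)) Ψ → ∀ x : Pt, ‖x‖ ≤ 1 - ε ^ (β / 4) →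
        ‖Ψ x‖ ^ 2 ≤ ε ^ (β / 3) * |log ε| *
          exp (-(Ω₁ / 24 * (1 - ε ^ (β / 4) - ‖x‖) ^ 2 / ε ^ (1 + β / 2))) := by
  obtain ⟨ε₀, hε₀, h⟩ := mem_nhdsGT_iff_exists_Ioo_subset.1
    ((eventually_norm_sq_le_of_isGPMinimizer hΩ₁ hβ).and (Ioo_mem_nhdsGT one_pos))
  refine ⟨ε₀, hε₀, fun ε hε hlt Ψ hΨ x hx => ?_⟩
  obtain ⟨hbound, -, hε1⟩ := h ⟨hε, hlt⟩
  have hΩ : Ω₁ / ε ^ (1 + β) ≤ Ω₁ / ε ^ (1 + α) :=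
    div_le_div_of_nonneg_left hΩ₁.le (rpow_pos_of_pos hε _)
      (rpow_le_rpow_of_exponent_ge hε hε1.le (by gcongr))
  exact hbound _ hΩ Ψ hΨ x hx

theorem stmt19 (Ω₁ α : ℝ) (hΩ : 0 < Ω₁) (hα : 0 < α) (hα2 : α < 2) :
    ∃ (C C' ε₀ : ℝ), 0 < C ∧ 0 < C' ∧ 0 < ε₀ ∧ ∀ ε : ℝ, 0 < ε → ε < ε₀ →
      ∀ Ψ : Pt → ℂ, IsGPMinimizer ε (Ω₁ / ε ^ (1 + α)) Ψ →
        ∀ x : Pt, ‖x‖ ≤ 1 - ε ^ (min α (2 - α) / 4) →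
          ‖Ψ x‖ ^ 2 ≤ C * ε ^ (min α (2 - α) / 3) * |Real.log ε| *
            Real.exp (-(C' * ((1 - ε ^ (min α (2 - α) / 4)) - ‖x‖) ^ 2 /
              ε ^ (1 + min α (2 - α) / 2))) := by
  obtain ⟨ε₀, hε₀, h⟩ := stmt19_general hΩ (lt_min hα (sub_pos.2 hα2)) (min_le_left α (2 - α))
  exact ⟨1, Ω₁ / 24, ε₀, one_pos, by positivity, hε₀, by simpa only [one_mul] using h⟩
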